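/- arXiv:2410.10116 — 8 statements merged into one kernel-verified Lean document; each statement's English description precedes it below -/
import Mathlib

section
/- Twirling into the distinct subspace. Let N ≥ 1, t ≥ 1, K ≥ 1. Let Π^dist be the diagonal projector on (ℂ^N)^{⊗t} onto the span of the basis vectors e_{x_1}⊗⋯⊗e_{x_t} with x_1,…,x_t ∈ [N] pairwise distinct. Then for every positive semidefinite matrix ρ on (ℂ^N)^{⊗t} ⊗ ℂ^K with Tr(ρ) = 1, one has ∫ Tr( (Π^dist⊗I_K) · (C^{⊗t}⊗I_K) · ρ · ((C^†)^{⊗t}⊗I_K) · (Π^dist⊗I_K) ) dμ(C) ≥ 1 − t(t−1)/(N+1), where μ is the normalized Haar probability measure on the unitary group U(N). -/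
/-!
Twirl the state before measuring it: tracing out `ℂ^K` and averaging over `C` leaves a positive
semidefinite matrix `τ` of trace one that commutes with every `V^{⊗t}`, and the integral in question
is the probability that measuring `τ` in the standard basis gives pairwise distinct letters. By a
union bound over pairs of positions it suffices that two given positions collide with probability
at most `2/(N+1)`.

The reduced matrix `M` of `τ` at two positions commutes with every `V ⊗ V`. As every unit vector is
a row of a unitary, `⟨v⊗v|M|v⊗v⟩` has the same value `m` for all unit vectors `v`. Averaging it over
`v = (e_a + i^k e_b)/√2`, `k < 4`, kills the cross terms and gives `2m = ⟨w|M|w⟩` for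
`w = e_a⊗e_b + e_b⊗e_a`. By the parallelogram law and positivity at `e_a⊗e_b - e_b⊗e_a`, this is at
most `2(q(a,b) + q(b,a))`, where `q(a,b)` is the probability of the letters `a, b`. Summing
`m = q(a,a) ≤ q(a,b) + q(b,a)` over `a ≠ b` gives `(N-1) P ≤ 2 (1-P)` for the collision probability
`P = ∑ q(a,a)`, i.e. `P ≤ 2/(N+1)`.
-/

open MeasureTheory
open scoped Kronecker Matrix ComplexOrder

noncomputable instance matrixMeasurableSpace {m n : Type*} : MeasurableSpace (Matrix m n ℂ) :=
  (inferInstance : MeasurableSpace (m → n → ℂ))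

/-- The `t`-fold tensor power `C^{⊗t}` of a matrix `C` on `ℂ^N`, as a matrix on
`(ℂ^N)^{⊗t}` (indexed by `Fin t → Fin N`). -/
noncomputable def tensorPow (N t : ℕ) (C : Matrix (Fin N) (Fin N) ℂ) :
    Matrix (Fin t → Fin N) (Fin t → Fin N) ℂ :=
  Matrix.of fun x y => ∏ i, C (x i) (y i)

/-- The diagonal projector on `(ℂ^N)^{⊗t}` onto the span of standard basis vectors with
pairwise distinct indices. -/
noncomputable def distProj (N t : ℕ) : Matrix (Fin t → Fin N) (Fin t → Fin N) ℂ :=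
  Matrix.diagonal fun x => if Function.Injective x then 1 else 0

section PartialTrace

variable {l m n o κ R : Type*} [Fintype κ]

/-- The partial trace `tr_κ A` of a matrix over the second tensor factor. Rectangular matrices are
allowed in the first factor. -/
def partialTrace [AddCommMonoid R] (A : Matrix (m × κ) (n × κ) R) : Matrix m n R :=
  Matrix.of fun x y => ∑ k, A (x, k) (y, k)

theorem trace_partialTrace [AddCommMonoid R] [Fintype m] (A : Matrix (m × κ) (m × κ) R) :
    (partialTrace A).trace = A.trace :=
  (Fintype.sum_prod_type fun p => A p p).symm

theorem partialTrace_kronecker_one_mul [NonAssocSemiring R] [DecidableEq κ] [Fintype m]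
    (A : Matrix l m R) (M : Matrix (m × κ) (n × κ) R) :
    partialTrace ((A ⊗ₖ (1 : Matrix κ κ R)) * M) = A * partialTrace M := by
  ext x y
  simp [partialTrace, Matrix.mul_apply, Matrix.one_apply, Fintype.sum_prod_type, Finset.mul_sum,
    Finset.sum_comm (s := (Finset.univ : Finset m))]

theorem partialTrace_mul_kronecker_one [NonAssocSemiring R] [DecidableEq κ] [Fintype n]
    (M : Matrix (m × κ) (n × κ) R) (B : Matrix n o R) :
    partialTrace (M * (B ⊗ₖ (1 : Matrix κ κ R))) = partialTrace M * B := by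
  ext x y
  simp [partialTrace, Matrix.mul_apply, Matrix.one_apply, Fintype.sum_prod_type, Finset.sum_mul,
    Finset.sum_comm (s := (Finset.univ : Finset n))]

theorem partialTrace_one_kronecker_mul_comm [NonAssocCommSemiring R] [Fintype m] [Fintype n]
    [DecidableEq m] [DecidableEq n] (D : Matrix κ κ R) (M : Matrix (m × κ) (n × κ) R) :
    partialTrace (((1 : Matrix m m R) ⊗ₖ D) * M) =
      partialTrace (M * ((1 : Matrix n n R) ⊗ₖ D)) := by
  ext x y
  calc ∑ k, (((1 : Matrix m m R) ⊗ₖ D) * M) (x, k) (y, k)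
      = ∑ k, ∑ q, D k q * M (x, q) (y, k) := by
        simp [Matrix.mul_apply, Matrix.one_apply, Fintype.sum_prod_type]
    _ = ∑ q, ∑ k, M (x, q) (y, k) * D k q := by
        rw [Finset.sum_comm]
        simp only [mul_comm]
    _ = ∑ q, (M * ((1 : Matrix n n R) ⊗ₖ D)) (x, q) (y, q) := by
        simp [Matrix.mul_apply, Matrix.one_apply, Fintype.sum_prod_type]

theorem partialTrace_kronecker_mul_mul [CommSemiring R] [Fintype m] [Fintype n] [DecidableEq κ]
    (A : Matrix l m R) (M : Matrix (m × κ) (n × κ) R) (B : Matrix n o R) {D E : Matrix κ κ R}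
    (hED : E * D = 1) :
    partialTrace ((A ⊗ₖ D) * M * (B ⊗ₖ E)) = A * partialTrace M * B := by
  classical
  calc partialTrace ((A ⊗ₖ D) * M * (B ⊗ₖ E))
      = partialTrace ((A ⊗ₖ (1 : Matrix κ κ R)) *
          (((1 : Matrix m m R) ⊗ₖ D) * (M * ((1 : Matrix n n R) ⊗ₖ E))) *
            (B ⊗ₖ (1 : Matrix κ κ R))) := by
        simp only [← Matrix.mul_assoc, ← Matrix.mul_kronecker_mul, Matrix.mul_one, Matrix.one_mul]
        simp only [Matrix.mul_assoc, ← Matrix.mul_kronecker_mul, Matrix.mul_one, Matrix.one_mul]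
    _ = A * partialTrace (M * (((1 : Matrix n n R) ⊗ₖ E) * ((1 : Matrix n n R) ⊗ₖ D))) * B := by
        rw [partialTrace_mul_kronecker_one, partialTrace_kronecker_one_mul,
          partialTrace_one_kronecker_mul_comm, Matrix.mul_assoc M]
    _ = A * partialTrace M * B := by
        rw [← Matrix.mul_kronecker_mul, hED, Matrix.one_mul, Matrix.one_kronecker_one,
          Matrix.mul_one]

theorem posSemidef_partialTrace [Ring R] [PartialOrder R] [StarRing R] [AddLeftMono R]
    {A : Matrix (m × κ) (m × κ) R} (hA : A.PosSemidef) : (partialTrace A).PosSemidef := by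
  have hsum : partialTrace A = ∑ k, A.submatrix (·, k) (·, k) := by
    ext x y
    simp [partialTrace, Matrix.sum_apply]
  rw [hsum]
  exact Matrix.posSemidef_sum _ fun k _ => hA.submatrix _

end PartialTrace

section KroneckerPow

variable {ι l m n R : Type*} [Fintype ι]

/-- The Kronecker power `A^{⊗ι}` of a matrix, indexed by words `ι → m` and `ι → n`. -/
def kroneckerPow [CommMonoid R] (ι : Type*) [Fintype ι] (A : Matrix m n R) :
    Matrix (ι → m) (ι → n) R :=
  Matrix.of fun x y => ∏ i, A (x i) (y i)

theorem kroneckerPow_one [CommSemiring R] [DecidableEq n] [DecidableEq (ι → n)] :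
    kroneckerPow ι (1 : Matrix n n R) = 1 := by
  ext x y
  simp [kroneckerPow, Matrix.one_apply, Fintype.prod_ite_zero, funext_iff]

theorem kroneckerPow_mul [CommSemiring R] [DecidableEq ι] [Fintype m] (A : Matrix l m R)
    (B : Matrix m n R) : kroneckerPow ι (A * B) = kroneckerPow ι A * kroneckerPow ι B := by
  ext x y
  simp [kroneckerPow, Matrix.mul_apply, Fintype.prod_sum, Finset.prod_mul_distrib]

theorem conjTranspose_kroneckerPow [CommSemiring R] [StarRing R] (A : Matrix m n R) :
    (kroneckerPow ι A)ᴴ = kroneckerPow ι Aᴴ := by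
  ext x y
  simp [kroneckerPow, star_prod]

theorem continuous_kroneckerPow [TopologicalSpace R] [CommMonoid R] [ContinuousMul R] :
    Continuous (kroneckerPow ι : Matrix m n R → Matrix (ι → m) (ι → n) R) :=
  continuous_matrix fun x y => continuous_finsetProd _ fun i _ =>
    continuous_id.matrix_elem (x i) (y i)

/-- The representation `A ↦ A^{⊗ι}` of the multiplicative monoid of square matrices. -/
def kroneckerPowHom [CommSemiring R] (ι : Type*) [Fintype ι] [DecidableEq ι] [Fintype n]
    [DecidableEq n] : Matrix n n R →* Matrix (ι → n) (ι → n) R where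
  toFun := kroneckerPow ι
  map_one' := kroneckerPow_one
  map_mul' := kroneckerPow_mul

theorem kroneckerPow_mem_unitaryGroup [CommRing R] [StarRing R] [DecidableEq ι] [Fintype n]
    [DecidableEq n] {A : Matrix n n R} (hA : A ∈ Matrix.unitaryGroup n R) :
    kroneckerPow ι A ∈ Matrix.unitaryGroup (ι → n) R := by
  rw [Matrix.mem_unitaryGroup_iff] at hA ⊢
  rw [Matrix.star_eq_conjTranspose, conjTranspose_kroneckerPow, ← kroneckerPow_mul,
    ← Matrix.star_eq_conjTranspose, hA, kroneckerPow_one]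

end KroneckerPow

section UnitaryGroup

variable {n 𝕜 : Type*} [RCLike 𝕜] [Fintype n] [DecidableEq n]

theorem exists_mem_unitaryGroup_row_eq {v : n → 𝕜} (hv : star v ⬝ᵥ v = 1) (a : n) :
    ∃ V ∈ Matrix.unitaryGroup n 𝕜, V a = v := by
  have hunit : Orthonormal 𝕜 (({a} : Set n).domRestrict fun _ => WithLp.toLp 2 v) := by
    refine orthonormal_iff_ite.2 fun i j => ?_
    rw [if_pos (Subsingleton.elim i j)]
    exact (dotProduct_comm _ _).trans hv
  obtain ⟨b, hb⟩ := hunit.exists_orthonormalBasis_extension_of_card_eq (by simp)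
  refine ⟨Matrix.of fun i => b i, ?_, congrArg WithLp.ofLp (hb a rfl)⟩
  rw [Matrix.mem_unitaryGroup_iff]
  ext i j
  have hinner := orthonormal_iff_ite.1 b.orthonormal j i
  simp only [EuclideanSpace.inner_eq_star_dotProduct] at hinner
  simpa [Matrix.mul_apply, Matrix.one_apply, dotProduct, eq_comm] using hinner

instance compactSpace_unitaryGroup : CompactSpace (Matrix.unitaryGroup n 𝕜) := by
  have hclosed : IsClosed (Matrix.unitaryGroup n 𝕜 : Set (Matrix n n 𝕜)) := isClosed_unitary
  refine isCompact_iff_compactSpace.1 <| (isCompact_univ_pi fun _ => isCompact_univ_pi fun _ =>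
    isCompact_closedBall (0 : 𝕜) 1).of_isClosed_subset hclosed fun U hU i _ j _ => ?_
  simpa using entry_norm_bound_of_unitary hU i j

instance borelSpace_matrix {m n : Type*} [Countable m] [Countable n] :
    BorelSpace (Matrix m n ℂ) :=
  inferInstanceAs (BorelSpace (m → n → ℂ))

end UnitaryGroup

section Twirl

open scoped MatrixOrder Matrix.Norms.L2Operator

variable {G m : Type*} [MeasurableSpace G] [Fintype m] [DecidableEq m]

/-- The twirl `∫ π(g) A π(g)† dμ(g)` of a matrix `A` by a family of matrices `π`, typically a
unitary representation. As a Bochner integral it is `0` when the integrand is not integrable. -/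
noncomputable def twirl (μ : Measure G) (π : G → Matrix m m ℂ) (A : Matrix m m ℂ) :
    Matrix m m ℂ :=
  ∫ g, π g * A * (π g)ᴴ ∂μ

theorem posSemidef_twirl (μ : Measure G) (π : G → Matrix m m ℂ) {A : Matrix m m ℂ}
    (hA : A.PosSemidef) : (twirl μ π A).PosSemidef :=
  Matrix.nonneg_iff_posSemidef.1 <| integral_nonneg fun g =>
    Matrix.nonneg_iff_posSemidef.2 <| hA.mul_mul_conjTranspose_same (π g)

variable [TopologicalSpace G] [CompactSpace G] [OpensMeasurableSpace G] {μ : Measure G}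
  {π : G → Matrix m m ℂ}

theorem linearMap_twirl [IsFiniteMeasure μ] (hπ : Continuous π) {F : Type*} [NormedAddCommGroup F]
    [NormedSpace ℝ F] [CompleteSpace F] (L : Matrix m m ℂ →ₗ[ℝ] F) (A : Matrix m m ℂ) :
    L (twirl μ π A) = ∫ g, L (π g * A * (π g)ᴴ) ∂μ := by
  have hint : Integrable (fun g => π g * A * (π g)ᴴ) μ :=
    Continuous.integrable_of_hasCompactSupport (by fun_prop) (.of_compactSpace _)
  exact (L.toContinuousLinearMap.integral_comp_comm hint).symm

theorem sum_re_twirl_apply [IsFiniteMeasure μ] (hπ : Continuous π) (A : Matrix m m ℂ)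
    (s : Finset m) :
    ∑ x ∈ s, (twirl μ π A x x).re = ∫ g, ∑ x ∈ s, ((π g * A * (π g)ᴴ) x x).re ∂μ := by
  simpa using linearMap_twirl hπ (∑ x ∈ s, Complex.reLm ∘ₗ Matrix.entryLinearMap ℝ ℂ x x) A

theorem trace_twirl [IsProbabilityMeasure μ] (hπ : Continuous π)
    (hunitary : ∀ g, π g ∈ Matrix.unitaryGroup m ℂ) (A : Matrix m m ℂ) :
    (twirl μ π A).trace = A.trace := by
  have htrace (g : G) : (π g * A * (π g)ᴴ).trace = A.trace := by
    rw [Matrix.trace_mul_comm, ← Matrix.mul_assoc, ← Matrix.star_eq_conjTranspose,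
      Matrix.mem_unitaryGroup_iff'.1 (hunitary g), Matrix.one_mul]
  calc (twirl μ π A).trace
      = ∫ g, (π g * A * (π g)ᴴ).trace ∂μ := linearMap_twirl hπ (Matrix.traceLinearMap m ℝ ℂ) A
    _ = A.trace := by simp only [htrace, integral_const, probReal_univ, one_smul]

theorem conj_twirl [Group G] [MeasurableMul G] [IsFiniteMeasure μ] [μ.IsMulLeftInvariant]
    {π : G →* Matrix m m ℂ} (hπ : Continuous π) (A : Matrix m m ℂ) (h : G) :
    π h * twirl μ π A * (π h)ᴴ = twirl μ π A :=
  calc π h * twirl μ π A * (π h)ᴴ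
      = ∫ g, π h * (π g * A * (π g)ᴴ) * (π h)ᴴ ∂μ :=
        linearMap_twirl hπ (LinearMap.mulRight ℝ (π h)ᴴ ∘ₗ LinearMap.mulLeft ℝ (π h)) A
    _ = ∫ g, π (h * g) * A * (π (h * g))ᴴ ∂μ := by
        simp only [map_mul, Matrix.conjTranspose_mul, mul_assoc]
    _ = twirl μ π A := integral_mul_left_eq_self (fun g => π g * A * (π g)ᴴ) h

end Twirl

section Expectation

variable {m R : Type*} [Fintype m]

/-- The quadratic form `⟨x|M|x⟩` of a matrix `M`: the expectation of the observable `M` in the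
state `x`, without normalising `x`. -/
def expectation [NonUnitalNonAssocSemiring R] [Star R] (M : Matrix m m R) (x : m → R) : R :=
  star x ⬝ᵥ M *ᵥ x

theorem expectation_smul [CommSemiring R] [StarRing R] (M : Matrix m m R) (c : R) (x : m → R) :
    expectation M (c • x) = star c * c * expectation M x := by
  simp only [expectation, star_smul, Matrix.mulVec_smul, smul_dotProduct, dotProduct_smul,
    smul_eq_mul]
  ring

theorem expectation_single [Semiring R] [StarRing R] [DecidableEq m] (M : Matrix m m R) (i : m) :
    expectation M (Pi.single i 1) = M i i := by
  simp [expectation]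

theorem expectation_parallelogram [Ring R] [StarRing R] (M : Matrix m m R) (x y : m → R) :
    expectation M (x + y) + expectation M (x - y) = 2 * (expectation M x + expectation M y) := by
  simp only [expectation, star_add, star_sub, Matrix.mulVec_add, Matrix.mulVec_sub, add_dotProduct,
    sub_dotProduct, dotProduct_add, dotProduct_sub, two_mul]
  abel

theorem sum_expectation_add_I_pow_smul (M : Matrix m m ℂ) (x y z : m → ℂ) :
    ∑ k ∈ Finset.range 4, expectation M (x + Complex.I ^ k • y + (Complex.I ^ k) ^ 2 • z) =
      4 * (expectation M x + expectation M y + expectation M z) := by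
  simp only [expectation, Finset.sum_range_succ, Finset.sum_range_zero, star_add, star_smul,
    star_pow, Complex.star_def, Complex.conj_I, Matrix.mulVec_add, Matrix.mulVec_smul,
    add_dotProduct, dotProduct_add, smul_dotProduct, dotProduct_smul, smul_eq_mul]
  grind [Complex.I_sq]

end Expectation

section TwoCopies

variable {n R 𝕜 : Type*}

/-- The product vector `v ⊗ v`. -/
def prodVec [Mul R] (v : n → R) : n × n → R := fun p => v p.1 * v p.2

theorem prodVec_smul [CommMonoid R] (c : R) (v : n → R) : prodVec (c • v) = c ^ 2 • prodVec v :=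
  funext fun p => (mul_mul_mul_comm c (v p.1) c (v p.2)).trans (by rw [← sq]; rfl)

theorem prodVec_single_add_smul_single [CommSemiring R] [DecidableEq n] (a b : n) (c : R) :
    prodVec (Pi.single a 1 + c • Pi.single b 1) =
      Pi.single (a, a) 1 + c • (Pi.single (a, b) 1 + Pi.single (b, a) 1) +
        c ^ 2 • Pi.single (b, b) 1 := by
  ext ⟨p, q⟩
  have hsingle (r s : n) : (Pi.single (r, s) 1 : n × n → R) (p, q) =
      (Pi.single r 1 : n → R) p * (Pi.single s 1 : n → R) q := by
    simp [Pi.single_apply, ← ite_and, and_comm]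
  simp only [prodVec, hsingle, Pi.add_apply, Pi.smul_apply, smul_eq_mul]
  ring

theorem star_single_add_smul_single_dotProduct [CommSemiring R] [StarRing R] [Fintype n]
    [DecidableEq n] {a b : n} (hab : a ≠ b) (c : R) :
    star (Pi.single a 1 + c • Pi.single b 1 : n → R) ⬝ᵥ (Pi.single a 1 + c • Pi.single b 1) =
      1 + star c * c := by
  simp [hab, hab.symm, mul_comm]

variable [RCLike 𝕜] [Fintype n] [DecidableEq n]

theorem expectation_prodVec_of_unit {M : Matrix (n × n) (n × n) 𝕜}
    (hinv : ∀ V ∈ Matrix.unitaryGroup n 𝕜, (V ⊗ₖ V) * M * (V ⊗ₖ V)ᴴ = M)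
    {v : n → 𝕜} (hv : star v ⬝ᵥ v = 1) (a : n) :
    expectation M (prodVec v) = M (a, a) (a, a) := by
  obtain ⟨V, hV, hVa⟩ := exists_mem_unitaryGroup_row_eq (v := star v)
    (by rwa [star_star, dotProduct_comm]) a
  conv_rhs => rw [← hinv V hV]
  rw [expectation, Matrix.dotProduct_mulVec]
  simp [Matrix.mul_apply, Matrix.vecMul, dotProduct, prodVec, hVa]

theorem expectation_prodVec {M : Matrix (n × n) (n × n) 𝕜}
    (hinv : ∀ V ∈ Matrix.unitaryGroup n 𝕜, (V ⊗ₖ V) * M * (V ⊗ₖ V)ᴴ = M) (v : n → 𝕜) (a : n) :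
    expectation M (prodVec v) = (star v ⬝ᵥ v) ^ 2 * M (a, a) (a, a) := by
  let r : 𝕜 := (‖WithLp.toLp 2 v‖ : ℝ)
  have hr : star v ⬝ᵥ v = r ^ 2 := by
    rw [dotProduct_comm]
    exact inner_self_eq_norm_sq_to_K (𝕜 := 𝕜) (WithLp.toLp 2 v)
  have hrstar : star r = r := RCLike.conj_ofReal _
  rcases eq_or_ne r 0 with hr0 | hr0
  · have hv : v = 0 := by simpa [r] using hr0
    have hprod : prodVec (0 : n → 𝕜) = 0 := funext fun _ => mul_zero 0
    simp [hv, hprod, expectation]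
  · have hunit : star (r⁻¹ • v) ⬝ᵥ (r⁻¹ • v) = 1 := by
      rw [star_smul, smul_dotProduct, dotProduct_smul, hr, star_inv₀, hrstar]
      simp only [smul_eq_mul]
      field_simp
    rw [hr, ← expectation_prodVec_of_unit hinv hunit a, prodVec_smul, expectation_smul, star_pow,
      star_inv₀, hrstar]
    field_simp

variable {M : Matrix (n × n) (n × n) ℂ}

theorem two_mul_apply_diag_eq_expectation
    (hinv : ∀ V ∈ Matrix.unitaryGroup n ℂ, (V ⊗ₖ V) * M * (V ⊗ₖ V)ᴴ = M) {a b : n} (hab : a ≠ b) :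
    2 * M (a, a) (a, a) = expectation M (Pi.single (a, b) 1 + Pi.single (b, a) 1) := by
  have hphase (k : ℕ) : expectation M (Pi.single (a, a) 1 +
      Complex.I ^ k • (Pi.single (a, b) 1 + Pi.single (b, a) 1) +
        (Complex.I ^ k) ^ 2 • Pi.single (b, b) 1) = 4 * M (a, a) (a, a) := by
    have hunit : star (Complex.I ^ k) * Complex.I ^ k = 1 := by simp [← mul_pow]
    rw [← prodVec_single_add_smul_single, expectation_prodVec hinv _ a,
      star_single_add_smul_single_dotProduct hab, hunit]
    norm_num
  have hbb : M (b, b) (b, b) = M (a, a) (a, a) := by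
    have hunit : star (Pi.single a 1 : n → ℂ) ⬝ᵥ Pi.single a 1 = 1 := by simp
    rw [← expectation_prodVec_of_unit hinv hunit b, expectation_prodVec_of_unit hinv hunit a]
  have haverage := sum_expectation_add_I_pow_smul M (Pi.single (a, a) 1)
    (Pi.single (a, b) 1 + Pi.single (b, a) 1) (Pi.single (b, b) 1)
  simp only [hphase, expectation_single, hbb, Finset.sum_const, Finset.card_range] at haverage
  linear_combination haverage / 4

theorem apply_diag_le_add_of_invariant (hM : M.PosSemidef)
    (hinv : ∀ V ∈ Matrix.unitaryGroup n ℂ, (V ⊗ₖ V) * M * (V ⊗ₖ V)ᴴ = M) {a b : n} (hab : a ≠ b) :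
    M (a, a) (a, a) ≤ M (a, b) (a, b) + M (b, a) (b, a) := by
  have hnonneg : 0 ≤ expectation M (Pi.single (a, b) 1 - Pi.single (b, a) 1) :=
    hM.dotProduct_mulVec_nonneg _
  have hparallelogram := expectation_parallelogram M (Pi.single (a, b) 1) (Pi.single (b, a) 1)
  rw [← two_mul_apply_diag_eq_expectation hinv hab, expectation_single, expectation_single]
    at hparallelogram
  have htwo : 2 * M (a, a) (a, a) ≤ 2 * (M (a, b) (a, b) + M (b, a) (b, a)) :=
    hparallelogram ▸ le_add_of_nonneg_right hnonneg
  exact le_of_mul_le_mul_left htwo two_pos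

theorem sum_re_apply_diag_le_of_invariant (hM : M.PosSemidef)
    (hinv : ∀ V ∈ Matrix.unitaryGroup n ℂ, (V ⊗ₖ V) * M * (V ⊗ₖ V)ᴴ = M) :
    (Fintype.card n + 1) * ∑ a, (M (a, a) (a, a)).re ≤ 2 * M.trace.re := by
  let p (a b : n) : ℝ := (M (a, b) (a, b)).re
  have hpair (a b : n) : p a a ≤ p a b + p b a - if a = b then p a a else 0 := by
    split_ifs with hab
    · simp [hab]
    · simpa [p] using (Complex.le_def.1 (apply_diag_le_add_of_invariant hM hinv hab)).1
  have htrace : M.trace.re = ∑ a, ∑ b, p a b := by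
    simp [p, Matrix.trace, Fintype.sum_prod_type]
  have hsum : ∑ a, ∑ _b : n, p a a ≤ ∑ a, ∑ b, (p a b + p b a - if a = b then p a a else 0) :=
    Finset.sum_le_sum fun a _ => Finset.sum_le_sum fun b _ => hpair a b
  simp only [Finset.sum_const, Finset.card_univ, nsmul_eq_mul, Finset.sum_sub_distrib,
    Finset.sum_add_distrib, Finset.sum_ite_eq, Finset.mem_univ, if_true, ← Finset.mul_sum,
    Finset.sum_comm (f := fun a b => p b a), ← htrace] at hsum
  linarith

end TwoCopies

section PairMarginal

variable {ι n R : Type*} [Fintype ι] [DecidableEq ι] {i j : ι}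

/-- Splits a word into the pair of its letters at two distinct positions `i` and `j` and the word
of the remaining letters. -/
def pairSplit (n : Type*) (hij : j ≠ i) :
    (ι → n) ≃ (n × n) × ({k : {k // k ≠ i} // k ≠ ⟨j, hij⟩} → n) :=
  (Equiv.funSplitAt i n).trans <|
    ((Equiv.refl n).prodCongr (Equiv.funSplitAt (⟨j, hij⟩ : {k // k ≠ i}) n)).trans
      (Equiv.prodAssoc n n _).symm

theorem kroneckerPow_eq_submatrix_pairSplit [CommMonoid R] (hij : j ≠ i) (V : Matrix n n R) :
    kroneckerPow ι V = ((V ⊗ₖ V) ⊗ₖ kroneckerPow {k : {k // k ≠ i} // k ≠ ⟨j, hij⟩} V).submatrix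
      (pairSplit n hij) (pairSplit n hij) := by
  ext x y
  calc ∏ k, V (x k) (y k)
      = V (x i) (y i) * (V (x j) (y j) *
          ∏ k : {k : {k // k ≠ i} // k ≠ ⟨j, hij⟩}, V (x k) (y k)) := by
        rw [Fintype.prod_eq_mul_prod_subtype_ne _ i, Fintype.prod_eq_mul_prod_subtype_ne _ ⟨j, hij⟩]
    _ = _ := (mul_assoc _ _ _).symm

variable [Fintype n]

/-- The reduced matrix of `M` at the two positions `i` and `j`: all other positions are traced
out. -/
def pairMarginal [AddCommMonoid R] (hij : j ≠ i) (M : Matrix (ι → n) (ι → n) R) :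
    Matrix (n × n) (n × n) R :=
  partialTrace (M.submatrix (pairSplit n hij).symm (pairSplit n hij).symm)

theorem posSemidef_pairMarginal [Ring R] [PartialOrder R] [StarRing R] [AddLeftMono R]
    (hij : j ≠ i) {M : Matrix (ι → n) (ι → n) R} (hM : M.PosSemidef) :
    (pairMarginal hij M).PosSemidef :=
  posSemidef_partialTrace (hM.submatrix _)

theorem trace_pairMarginal [AddCommMonoid R] (hij : j ≠ i) (M : Matrix (ι → n) (ι → n) R) :
    (pairMarginal hij M).trace = M.trace :=
  (trace_partialTrace _).trans <| (pairSplit n hij).symm.sum_comp fun x => M x x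

theorem sum_pairMarginal_apply_diag [AddCommMonoid R] [DecidableEq n] (hij : j ≠ i)
    (M : Matrix (ι → n) (ι → n) R) :
    ∑ a, pairMarginal hij M (a, a) (a, a) = ∑ x with x i = x j, M x x := by
  have hfst (y) : (pairSplit n hij).symm y i = y.1.1 :=
    congrArg (·.1.1) ((pairSplit n hij).apply_symm_apply y)
  have hsnd (y) : (pairSplit n hij).symm y j = y.1.2 :=
    congrArg (·.1.2) ((pairSplit n hij).apply_symm_apply y)
  calc ∑ a, pairMarginal hij M (a, a) (a, a)
      = ∑ a, ∑ b, if a = b then pairMarginal hij M (a, b) (a, b) else 0 := by simp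
    _ = ∑ y, if y.1.1 = y.1.2 then
          M ((pairSplit n hij).symm y) ((pairSplit n hij).symm y) else 0 := by
        simp only [Fintype.sum_prod_type]
        refine Finset.sum_congr rfl fun a _ => Finset.sum_congr rfl fun b _ => ?_
        split_ifs
        · rfl
        · rw [Finset.sum_const_zero]
    _ = ∑ x with x i = x j, M x x := by
        rw [Finset.sum_filter, ← (pairSplit n hij).symm.sum_comp]
        simp only [hfst, hsnd]

theorem pairMarginal_kroneckerPow_conj [CommRing R] [StarRing R] [DecidableEq n] (hij : j ≠ i)
    {V : Matrix n n R} (hV : V ∈ Matrix.unitaryGroup n R) (M : Matrix (ι → n) (ι → n) R) :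
    pairMarginal hij (kroneckerPow ι V * M * (kroneckerPow ι V)ᴴ) =
      (V ⊗ₖ V) * pairMarginal hij M * (V ⊗ₖ V)ᴴ := by
  let W : Matrix ({k : {k // k ≠ i} // k ≠ ⟨j, hij⟩} → n) _ R := kroneckerPow _ V
  have hW : Wᴴ * W = 1 := Matrix.mem_unitaryGroup_iff'.1 (kroneckerPow_mem_unitaryGroup hV)
  rw [kroneckerPow_eq_submatrix_pairSplit hij, pairMarginal, pairMarginal,
    ← partialTrace_kronecker_mul_mul _ _ _ hW, ← Matrix.conjTranspose_kronecker]
  simp only [← Matrix.submatrix_mul_equiv _ _ _ (pairSplit n hij).symm,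
    Matrix.conjTranspose_submatrix, Matrix.submatrix_submatrix, Equiv.self_comp_symm,
    Matrix.submatrix_id_id, W]

theorem sum_re_diag_collision_le [DecidableEq n] {M : Matrix (ι → n) (ι → n) ℂ} (hM : M.PosSemidef)
    (hinv : ∀ V ∈ Matrix.unitaryGroup n ℂ, kroneckerPow ι V * M * (kroneckerPow ι V)ᴴ = M)
    (hij : i ≠ j) :
    ∑ x with x i = x j, (M x x).re ≤ 2 / (Fintype.card n + 1) * M.trace.re := by
  have hle := sum_re_apply_diag_le_of_invariant (posSemidef_pairMarginal hij.symm hM) fun V hV => by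
    rw [← pairMarginal_kroneckerPow_conj hij.symm hV, hinv V hV]
  rw [← Complex.re_sum, sum_pairMarginal_apply_diag, trace_pairMarginal, Complex.re_sum] at hle
  rw [div_mul_eq_mul_div, le_div_iff₀' (by positivity)]
  exact hle

end PairMarginal

section UnionBound

variable {ι n R : Type*} [Fintype ι] [DecidableEq n]

theorem two_le_card_collisions {x : ι → n} (hx : ¬Function.Injective x) :
    2 ≤ (Finset.univ.offDiag.filter fun q : ι × ι => x q.1 = x q.2).card := by
  classical
  obtain ⟨i, j, hxij, hij⟩ := Function.not_injective_iff.1 hx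
  have hsub : {(i, j), (j, i)} ⊆ Finset.univ.offDiag.filter fun q : ι × ι => x q.1 = x q.2 := by
    simp [Finset.insert_subset_iff, hij, hij.symm, hxij]
  calc 2 = ({(i, j), (j, i)} : Finset (ι × ι)).card := by simp [hij]
    _ ≤ _ := Finset.card_le_card hsub

variable [DecidableEq ι] [Fintype n]

theorem two_mul_sum_not_injective_le [Semiring R] [PartialOrder R] [IsOrderedRing R]
    {p : (ι → n) → R} (hp : ∀ x, 0 ≤ p x) :
    2 * ∑ x with ¬Function.Injective x, p x ≤
      ∑ q ∈ (Finset.univ : Finset ι).offDiag, ∑ x with x q.1 = x q.2, p x := by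
  have hswap : ∑ q ∈ (Finset.univ : Finset ι).offDiag, ∑ x with x q.1 = x q.2, p x =
      ∑ x, (Finset.univ.offDiag.filter fun q : ι × ι => x q.1 = x q.2).card * p x := by
    simp only [Finset.sum_filter]
    rw [Finset.sum_comm]
    simp only [← Finset.sum_filter, Finset.sum_const, nsmul_eq_mul]
  rw [hswap, Finset.sum_filter, Finset.mul_sum]
  refine Finset.sum_le_sum fun x _ => ?_
  split_ifs with hx
  · rw [mul_zero]
    exact mul_nonneg (Nat.cast_nonneg _) (hp x)
  · have hcard := Nat.mono_cast (α := R) (two_le_card_collisions hx)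
    exact mul_le_mul_of_nonneg_right (by simpa using hcard) (hp x)

theorem le_sum_re_injective_diag {M : Matrix (ι → n) (ι → n) ℂ} (hM : M.PosSemidef)
    (hinv : ∀ V ∈ Matrix.unitaryGroup n ℂ, kroneckerPow ι V * M * (kroneckerPow ι V)ᴴ = M) :
    (1 - Fintype.card ι * (Fintype.card ι - 1) / (Fintype.card n + 1)) * M.trace.re ≤
      ∑ x with Function.Injective x, (M x x).re := by
  have hsplit : ∑ x with Function.Injective x, (M x x).re +
      ∑ x with ¬Function.Injective x, (M x x).re = M.trace.re := by
    rw [Finset.sum_filter_add_sum_filter_not, Matrix.trace, Complex.re_sum]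
    rfl
  have hcollision : 2 * ∑ x with ¬Function.Injective x, (M x x).re ≤
      Fintype.card ι * (Fintype.card ι - 1) * (2 / (Fintype.card n + 1) * M.trace.re) :=
    calc 2 * ∑ x with ¬Function.Injective x, (M x x).re
        ≤ ∑ q ∈ (Finset.univ : Finset ι).offDiag, ∑ x with x q.1 = x q.2, (M x x).re :=
          two_mul_sum_not_injective_le fun x => (Complex.le_def.1 hM.diag_nonneg).1
      _ ≤ ∑ _q ∈ (Finset.univ : Finset ι).offDiag, 2 / (Fintype.card n + 1) * M.trace.re :=
          Finset.sum_le_sum fun q hq =>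
            sum_re_diag_collision_le hM hinv (Finset.mem_offDiag.1 hq).2.2
      _ = Fintype.card ι * (Fintype.card ι - 1) * (2 / (Fintype.card n + 1) * M.trace.re) := by
          rw [Finset.sum_const, nsmul_eq_mul, Finset.offDiag_card, Finset.card_univ,
            Nat.cast_sub (Nat.le_mul_self _)]
          push_cast
          ring
  linear_combination hcollision / 2 - hsplit

end UnionBound

section DistinctSubspace

theorem re_trace_distProj_conj {N t : ℕ} {κ : Type*} [Fintype κ] [DecidableEq κ]
    (A B : Matrix (Fin t → Fin N) (Fin t → Fin N) ℂ)
    (ρ : Matrix ((Fin t → Fin N) × κ) ((Fin t → Fin N) × κ) ℂ) :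
    (((distProj N t ⊗ₖ (1 : Matrix κ κ ℂ)) * (A ⊗ₖ (1 : Matrix κ κ ℂ)) * ρ *
      (B ⊗ₖ (1 : Matrix κ κ ℂ)) * (distProj N t ⊗ₖ (1 : Matrix κ κ ℂ))).trace).re =
      ∑ x with Function.Injective x, ((A * partialTrace ρ * B) x x).re := by
  rw [← trace_partialTrace, partialTrace_mul_kronecker_one, partialTrace_mul_kronecker_one,
    Matrix.mul_assoc _ _ ρ, partialTrace_kronecker_one_mul, partialTrace_kronecker_one_mul,
    Matrix.mul_assoc (distProj N t), Finset.sum_filter, Matrix.trace, Complex.re_sum]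
  refine Finset.sum_congr rfl fun x _ => ?_
  rw [Matrix.diag_apply, distProj, Matrix.mul_diagonal, Matrix.diagonal_mul]
  split_ifs <;> simp

end DistinctSubspace

/-- **Twirling into the distinct subspace.** For any density matrix `ρ` on
`(ℂ^N)^{⊗t} ⊗ ℂ^K` and the normalized Haar probability measure `μ` on `U(N)`
(characterized as a left-invariant probability measure),
`∫ Tr(Π^dist⊗I · C^{⊗t}⊗I · ρ · (C†)^{⊗t}⊗I · Π^dist⊗I) dμ(C) ≥ 1 − t(t−1)/(N+1)`. -/
theorem twirling_into_distinct_subspace (N t K : ℕ) (hN : 1 ≤ N) (ht : 1 ≤ t) (hK : 1 ≤ K)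
    (ρ : Matrix ((Fin t → Fin N) × Fin K) ((Fin t → Fin N) × Fin K) ℂ)
    (hρ : ρ.PosSemidef) (hρtr : ρ.trace = 1)
    (μ : Measure (Matrix.unitaryGroup (Fin N) ℂ)) [IsProbabilityMeasure μ]
    (hinv : ∀ V : Matrix.unitaryGroup (Fin N) ℂ, μ.map (fun U => V * U) = μ) :
    1 - (t : ℝ) * ((t : ℝ) - 1) / ((N : ℝ) + 1) ≤
      ∫ C,
        (((distProj N t ⊗ₖ (1 : Matrix (Fin K) (Fin K) ℂ)) *
            (tensorPow N t (C : Matrix (Fin N) (Fin N) ℂ) ⊗ₖ (1 : Matrix (Fin K) (Fin K) ℂ)) *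
            ρ *
            (tensorPow N t ((C : Matrix (Fin N) (Fin N) ℂ)ᴴ) ⊗ₖ (1 : Matrix (Fin K) (Fin K) ℂ)) *
            (distProj N t ⊗ₖ (1 : Matrix (Fin K) (Fin K) ℂ))).trace).re ∂μ := by
  have : μ.IsMulLeftInvariant := ⟨hinv⟩
  let π : Matrix.unitaryGroup (Fin N) ℂ →* Matrix (Fin t → Fin N) (Fin t → Fin N) ℂ :=
    (kroneckerPowHom (Fin t)).comp (Matrix.unitaryGroup (Fin N) ℂ).subtype
  have hπ : Continuous π := continuous_kroneckerPow.comp continuous_subtype_val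
  have hπstar (C) : (π C)ᴴ = tensorPow N t (C : Matrix (Fin N) (Fin N) ℂ)ᴴ :=
    conjTranspose_kroneckerPow _
  let τ := twirl μ π (partialTrace ρ)
  have hτ : τ.PosSemidef := posSemidef_twirl μ π (posSemidef_partialTrace hρ)
  have hτtr : τ.trace = 1 := by
    rw [trace_twirl hπ (fun V => kroneckerPow_mem_unitaryGroup V.2), trace_partialTrace, hρtr]
  have hτinv (V) (hV : V ∈ Matrix.unitaryGroup (Fin N) ℂ) :
      kroneckerPow (Fin t) V * τ * (kroneckerPow (Fin t) V)ᴴ = τ :=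
    conj_twirl hπ (partialTrace ρ) ⟨V, hV⟩
  calc 1 - (t : ℝ) * ((t : ℝ) - 1) / ((N : ℝ) + 1)
      ≤ ∑ x with Function.Injective x, (τ x x).re := by
        simpa [hτtr] using le_sum_re_injective_diag hτ hτinv
    _ = ∫ C, ∑ x with Function.Injective x, ((π C * partialTrace ρ * (π C)ᴴ) x x).re ∂μ :=
        sum_re_twirl_apply hπ _ _
    _ = _ := by
        simp only [re_trace_distProj_conj, hπstar]
        rfl
end

section
/- Sequential gentle measurement. Let H be a finite-dimensional complex inner product space, let t ≥ 0, let P_1,…,P_t : H → H be orthogonal projections, let U_1,…,U_t : H → H be unitaries, and let ψ ∈ H be a unit vector. Then ‖U_t⋯U_1 ψ − P_t U_t P_{t−1} U_{t−1} ⋯ P_1 U_1 ψ‖ ≤ t·√(1 − ‖P_t U_t P_{t−1} U_{t−1} ⋯ P_1 U_1 ψ‖²). -/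
/-! Replace the projected steps by the bare unitaries one at a time. Let `φ i` be the state after
`i` projected steps. Unitaries do not enlarge an error already made, so the distance between the
two final states is at most the sum of the local errors `‖U φ i - P U φ i‖`. By Pythagoras the
square of the `i`-th local error is the loss `‖φ i‖² - ‖φ (i + 1)‖²`, and the losses telescope to
`1 - ‖φ t‖²`. Cauchy-Schwarz then bounds the sum of the local errors by `√t * √(1 - ‖φ t‖²)`,
which is even better than the factor `t`. -/

open scoped InnerProductSpace

/-- Iterated composition: `chainLM F t = F (t-1) ∘ₗ ⋯ ∘ₗ F 0`, with `F 0` applied first. -/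
def chainLM {H : Type*} [AddCommGroup H] [Module ℂ H]
    (F : ℕ → (H →ₗ[ℂ] H)) : ℕ → (H →ₗ[ℂ] H)
  | 0 => LinearMap.id
  | (n + 1) => F n ∘ₗ chainLM F n

section InnerProduct

variable {𝕜 E : Type*} [RCLike 𝕜] [SeminormedAddCommGroup E] [InnerProductSpace 𝕜 E]

lemma norm_sub_sq_le_of_norm_sq_le_re_inner {x y : E} (h : ‖y‖ ^ 2 ≤ RCLike.re ⟪y, x⟫_𝕜) :
    ‖x - y‖ ^ 2 ≤ ‖x‖ ^ 2 - ‖y‖ ^ 2 := by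
  have hexpand := norm_sub_sq (𝕜 := 𝕜) x y
  rw [inner_re_symm] at hexpand
  linarith

lemma norm_sq_eq_re_inner_of_isSymmetricProjection {P : E →ₗ[𝕜] E}
    (hP : P.IsSymmetricProjection) (x : E) : ‖P x‖ ^ 2 = RCLike.re ⟪P x, x⟫_𝕜 := by
  have hPP : P (P x) = P x := LinearMap.congr_fun hP.isIdempotentElem x
  rw [← inner_self_eq_norm_sq (𝕜 := 𝕜), ← hP.isSymmetric (P x) x, hPP]

end InnerProduct

lemma norm_chainLM_sub_chainLM_le_sum {H : Type*} [SeminormedAddCommGroup H] [Module ℂ H]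
    {F G : ℕ → (H →ₗ[ℂ] H)} {t : ℕ} (hF : ∀ i < t, ∀ x, ‖F i x‖ ≤ ‖x‖) (ψ : H) :
    ‖chainLM F t ψ - chainLM G t ψ‖ ≤
      ∑ i ∈ Finset.range t, ‖F i (chainLM G i ψ) - chainLM G (i + 1) ψ‖ := by
  induction t with
  | zero => simp [chainLM]
  | succ n ih =>
    have hprev := ih fun i hi => hF i (hi.trans n.lt_succ_self)
    rw [Finset.sum_range_succ]
    calc ‖F n (chainLM F n ψ) - chainLM G (n + 1) ψ‖
        ≤ ‖F n (chainLM F n ψ) - F n (chainLM G n ψ)‖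
            + ‖F n (chainLM G n ψ) - chainLM G (n + 1) ψ‖ :=
          norm_sub_le_norm_sub_add_norm_sub _ _ _
      _ ≤ ∑ i ∈ Finset.range n, ‖F i (chainLM G i ψ) - chainLM G (i + 1) ψ‖
            + ‖F n (chainLM G n ψ) - chainLM G (n + 1) ψ‖ := by
          rw [← map_sub]
          gcongr
          exact (hF n n.lt_succ_self _).trans hprev

lemma sum_le_sqrt_mul_sqrt_of_sq_le_sub {t : ℕ} {e a : ℕ → ℝ}
    (h : ∀ i < t, e i ^ 2 ≤ a i - a (i + 1)) :
    ∑ i ∈ Finset.range t, e i ≤ √t * √(a 0 - a t) := by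
  rw [← Real.sqrt_mul t.cast_nonneg]
  apply Real.le_sqrt_of_sq_le
  calc (∑ i ∈ Finset.range t, e i) ^ 2
      ≤ t * ∑ i ∈ Finset.range t, e i ^ 2 := by
        simpa only [Finset.card_range] using
          sq_sum_le_card_mul_sum_sq (s := Finset.range t) (f := e)
    _ ≤ t * ∑ i ∈ Finset.range t, (a i - a (i + 1)) := by
        gcongr with i hi
        exact h i (Finset.mem_range.mp hi)
    _ = t * (a 0 - a t) := by rw [Finset.sum_range_sub']

lemma sqrt_natCast_le_self (n : ℕ) : √(n : ℝ) ≤ n :=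
  (Real.sqrt_le_left n.cast_nonneg).mpr (mod_cast Nat.le_self_pow two_ne_zero n)

/-- The condition on `P i` (firm nonexpansiveness) holds for orthogonal projections and, more
generally, for all quantum effects `0 ≤ P i ≤ 1`. -/
theorem sequential_gentle_measurement_general {H : Type*} [SeminormedAddCommGroup H]
    [InnerProductSpace ℂ H] (t : ℕ) (P U : ℕ → (H →ₗ[ℂ] H))
    (hP : ∀ i < t, ∀ x : H, ‖P i x‖ ^ 2 ≤ RCLike.re ⟪P i x, x⟫_ℂ)
    (hU : ∀ i < t, ∀ x : H, ‖U i x‖ ≤ ‖x‖) (ψ : H) :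
    ‖chainLM U t ψ - chainLM (fun i => P i ∘ₗ U i) t ψ‖ ≤
      √t * √(‖ψ‖ ^ 2 - ‖chainLM (fun i => P i ∘ₗ U i) t ψ‖ ^ 2) := by
  let φ : ℕ → H := fun i => chainLM (fun i => P i ∘ₗ U i) i ψ
  have hloss : ∀ i < t, ‖U i (φ i) - φ (i + 1)‖ ^ 2 ≤ ‖φ i‖ ^ 2 - ‖φ (i + 1)‖ ^ 2 := by
    intro i hi
    calc ‖U i (φ i) - φ (i + 1)‖ ^ 2
        ≤ ‖U i (φ i)‖ ^ 2 - ‖φ (i + 1)‖ ^ 2 :=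
          norm_sub_sq_le_of_norm_sq_le_re_inner (hP i hi (U i (φ i)))
      _ ≤ ‖φ i‖ ^ 2 - ‖φ (i + 1)‖ ^ 2 := by
          gcongr
          exact hU i hi (φ i)
  exact (norm_chainLM_sub_chainLM_le_sum hU ψ).trans
    (sum_le_sqrt_mul_sqrt_of_sq_le_sub (a := fun i => ‖φ i‖ ^ 2) hloss)

/-- **Sequential gentle measurement.** For orthogonal projections `P 0, …, P (t-1)`,
unitaries `U 0, …, U (t-1)` and a unit vector `ψ`,
`‖U_t⋯U_1 ψ − P_t U_t ⋯ P_1 U_1 ψ‖ ≤ t·√(1 − ‖P_t U_t ⋯ P_1 U_1 ψ‖²)`. -/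
theorem sequential_gentle_measurement {H : Type*} [NormedAddCommGroup H]
    [InnerProductSpace ℂ H] [FiniteDimensional ℂ H]
    (t : ℕ) (P U : ℕ → (H →ₗ[ℂ] H))
    (hPidem : ∀ i < t, P i ∘ₗ P i = P i)
    (hPsa : ∀ i < t, ∀ x y : H, ⟪P i x, y⟫_ℂ = ⟪x, P i y⟫_ℂ)
    (hUiso : ∀ i < t, ∀ x : H, ‖U i x‖ = ‖x‖)
    (hUbij : ∀ i < t, Function.Bijective (U i))
    (ψ : H) (hψ : ‖ψ‖ = 1) :
    ‖chainLM U t ψ - chainLM (fun i => P i ∘ₗ U i) t ψ‖ ≤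
      t * Real.sqrt (1 - ‖chainLM (fun i => P i ∘ₗ U i) t ψ‖ ^ 2) := by
  have hP := fun i hi x =>
    (norm_sq_eq_re_inner_of_isSymmetricProjection ⟨hPidem i hi, hPsa i hi⟩ x).le
  simpa only [hψ, one_pow] using
    (sequential_gentle_measurement_general t P U hP (fun i hi x => (hUiso i hi x).le) ψ).trans
      (mul_le_mul_of_nonneg_right (sqrt_natCast_le_self t) (Real.sqrt_nonneg _))
end

section
/- Orthonormality of the pf-relation states (binary phases). Let N ≥ 1. For a tuple p = ((x_1,y_1),…,(x_t,y_t)) ∈ ([N]×[N])^t with t ≤ N, define the vector pf_p ∈ ℓ²(S_N × ({0,1}^{[N]})) by pf_p(π,f) := (1/√((N−t)!)) · 𝟙[π(x_i)=y_i for all i ∈ [t]] · (1/√(2^N)) · (−1)^{f(x_1)+⋯+f(x_t)}. Then for any two bijective tuples p and p' (of possibly different lengths t, t' ≤ N), the inner product ⟨pf_{p'}, pf_p⟩ equals 1 if the multisets {(x_1,y_1),…,(x_t,y_t)} and {(x'_1,y'_1),…,(x'_{t'},y'_{t'})} are equal, and equals 0 otherwise. In particular, the pf-relation states of bijective tuples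 form an orthonormal family indexed by bijective relations. -/
/-!
A bijective tuple is a bijective relation `R` on `[N]`, and its state is the tensor product of the
indicator of the permutations extending `R` with the Walsh function of the domain of `R`. Walsh
functions of different sets are orthogonal, so two states can only overlap if their relations have
the same domain. A permutation extending `R` makes `R` its own graph over that domain, so two
relations with the same domain and a common extension are equal. Finally, the permutations extending
`R` form a coset of those fixing its domain pointwise, which gives the normalisation `(N - t)!`.
-/

open Finset

/-- The pf-relation vector `pf_p ∈ ℓ²(S_N × {0,1}^{[N]})` of a tuple
`p = ((x_1,y_1),…,(x_t,y_t))`: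
`pf_p(π,f) = (1/√((N−t)!)) · 𝟙[π x_i = y_i ∀i] · (1/√(2^N)) · (−1)^{f(x_1)+⋯+f(x_t)}`. -/
noncomputable def pfVec (N t : ℕ) (p : Fin t → Fin N × Fin N) :
    Equiv.Perm (Fin N) × (Fin N → Fin 2) → ℂ :=
  fun q =>
    (Real.sqrt ((N - t).factorial) : ℂ)⁻¹ *
      (if ∀ i, q.1 (p i).1 = (p i).2 then 1 else 0) *
      (Real.sqrt (2 ^ N) : ℂ)⁻¹ *
      (-1 : ℂ) ^ (∑ i, ((q.2 (p i).1 : ℕ)))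

/-- A tuple of pairs is bijective if its first coordinates are pairwise distinct and its
second coordinates are pairwise distinct. -/
def IsBijTuple {N t : ℕ} (p : Fin t → Fin N × Fin N) : Prop :=
  Function.Injective (fun i => (p i).1) ∧ Function.Injective (fun i => (p i).2)

open Equiv (Perm)
open scoped Nat

section Walsh

variable {α : Type*} (K : Type*) [CommRing K]

/-- The Walsh function of `s`, i.e. the character `f ↦ (-1) ^ ∑ x ∈ s, f x` of `(ℤ/2)^α`; the bits
are summed as natural numbers, as in `pfVec`. -/
def walsh (s : Finset α) (f : α → Fin 2) : K :=
  (-1) ^ ∑ x ∈ s, (f x : ℕ)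

variable [Fintype α] [DecidableEq α]

lemma walsh_eq_prod_ite (s : Finset α) (f : α → Fin 2) :
    walsh K s f = ∏ x, if x ∈ s then (-1) ^ (f x : ℕ) else 1 := by
  rw [walsh, ← prod_pow_eq_pow_sum, Fintype.prod_ite_mem]

theorem sum_walsh_mul_walsh (s t : Finset α) :
    ∑ f, walsh K s f * walsh K t f = if s = t then 2 ^ Fintype.card α else 0 := by
  let χ (u : Finset α) (x : α) (b : Fin 2) : K := if x ∈ u then (-1) ^ (b : ℕ) else 1
  have sum_χ (x : α) : ∑ b, χ s x b * χ t x b = if x ∈ s ↔ x ∈ t then 2 else 0 := by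
    by_cases hs : x ∈ s <;> by_cases ht : x ∈ t <;> simp [χ, hs, ht, one_add_one_eq_two]
  calc ∑ f, walsh K s f * walsh K t f
      = ∑ f : α → Fin 2, ∏ x, χ s x (f x) * χ t x (f x) := by
        simp only [walsh_eq_prod_ite, prod_mul_distrib, χ]
    _ = ∏ x, ∑ b, χ s x b * χ t x b := (Fintype.prod_sum fun x b ↦ χ s x b * χ t x b).symm
    _ = if s = t then 2 ^ Fintype.card α else 0 := by
        simp [sum_χ, Fintype.prod_ite_zero, Finset.ext_iff]

end Walsh

section Extensions

variable {α : Type*} {R R' : Finset (α × α)} {π : Perm α}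

/-- A bijective relation, i.e. the graph of a bijection between two subsets of `α`. -/
def IsBijRel (R : Finset (α × α)) : Prop :=
  Set.InjOn Prod.fst (R : Set (α × α)) ∧ Set.InjOn Prod.snd (R : Set (α × α))

variable [DecidableEq α]

/-- The domain of a relation. -/
def relDom (R : Finset (α × α)) : Finset α :=
  R.image Prod.fst

lemma IsBijRel.card_relDom (hR : IsBijRel R) : #(relDom R) = #R :=
  card_image_of_injOn hR.1

variable [Fintype α]

/-- The permutations extending a relation, i.e. those whose graph contains it. -/
def extensions (R : Finset (α × α)) : Finset (Perm α) :=
  {π | ∀ z ∈ R, π z.1 = z.2}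

lemma mem_extensions : π ∈ extensions R ↔ ∀ z ∈ R, π z.1 = z.2 := by
  simp [extensions]

lemma image_graph_relDom_of_mem_extensions (h : π ∈ extensions R) :
    (relDom R).image (fun x ↦ (x, π x)) = R := by
  rw [relDom, image_image]
  calc R.image ((fun x ↦ (x, π x)) ∘ Prod.fst)
      = R.image id := image_congr fun z hz ↦ Prod.ext rfl (mem_extensions.1 h z hz)
    _ = R := image_id

lemma eq_of_relDom_eq_of_mem_extensions (hdom : relDom R = relDom R')
    (h : π ∈ extensions R) (h' : π ∈ extensions R') : R = R' := by
  rw [← image_graph_relDom_of_mem_extensions h, hdom, image_graph_relDom_of_mem_extensions h']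

lemma IsBijRel.extensions_nonempty (hR : IsBijRel R) : (extensions R).Nonempty := by
  obtain ⟨σ, hσ⟩ := Perm.exists_extending_pair (fun z : R ↦ z.1.1) (fun z : R ↦ z.1.2)
    hR.1.injective hR.2.injective
  exact ⟨σ, mem_extensions.2 fun z hz ↦ hσ ⟨z, hz⟩⟩

lemma card_perm_fixing (s : Finset α) :
    #{π : Perm α | ∀ x ∈ s, π x = x} = (Fintype.card α - #s)! := by
  let e : {π : Perm α // ∀ x, ¬ x ∉ s → π x = x} ≃ {π : Perm α // ∀ x ∈ s, π x = x} :=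
    Equiv.subtypeEquivRight fun π ↦ by simp only [not_not]
  calc #{π : Perm α | ∀ x ∈ s, π x = x}
      = Fintype.card {π : Perm α // ∀ x ∈ s, π x = x} := (Fintype.card_subtype _).symm
    _ = Fintype.card (Perm {x // x ∉ s}) :=
        (Fintype.card_congr ((Perm.subtypeEquivSubtypePerm (· ∉ s)).trans e)).symm
    _ = (Fintype.card α - #s)! := by
        rw [Fintype.card_perm, Fintype.card_subtype_compl, Fintype.card_coe]

theorem IsBijRel.card_extensions (hR : IsBijRel R) :
    #(extensions R) = (Fintype.card α - #R)! := by
  obtain ⟨σ, hσ⟩ := hR.extensions_nonempty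
  rw [← hR.card_relDom, ← card_perm_fixing]
  refine card_equiv (Equiv.mulLeft σ⁻¹) fun π ↦ ?_
  simp only [mem_extensions, relDom, mem_filter_univ, forall_mem_image, Equiv.coe_mulLeft,
    Perm.mul_apply, Perm.inv_eq_iff_eq]
  exact forall₂_congr fun z hz ↦ by rw [mem_extensions.1 hσ z hz]

end Extensions

section RelState

variable {α : Type*} [Fintype α] [DecidableEq α] {R R' : Finset (α × α)}

/-- The pf-relation state of a relation on a finite type. The phase is taken over the domain of the
relation, which agrees with the sum over its pairs as soon as the relation is bijective. -/
noncomputable def relState (R : Finset (α × α)) : EuclideanSpace ℂ (Perm α × (α → Fin 2)) :=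
  WithLp.toLp 2 fun q ↦
    (√(Fintype.card α - #R)! : ℂ)⁻¹ * (if q.1 ∈ extensions R then 1 else 0) *
      (√(2 ^ Fintype.card α) : ℂ)⁻¹ * walsh ℂ (relDom R) q.2

theorem inner_relState (R R' : Finset (α × α)) :
    inner ℂ (relState R) (relState R') =
      (√(Fintype.card α - #R)! : ℂ)⁻¹ * (√(Fintype.card α - #R')! : ℂ)⁻¹ *
        if relDom R = relDom R' then (#(extensions R ∩ extensions R') : ℂ) else 0 := by
  set a : ℂ := (√(Fintype.card α - #R)! : ℂ)⁻¹
  set b : ℂ := (√(Fintype.card α - #R')! : ℂ)⁻¹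
  set c : ℂ := (√(2 ^ Fintype.card α) : ℂ)⁻¹
  have hc : c * c * 2 ^ Fintype.card α = 1 := by
    rw [← mul_inv, ← Complex.ofReal_mul, Real.mul_self_sqrt (by positivity)]
    simp
  have hperm : ∑ π, (if π ∈ extensions R then 1 else 0) * (if π ∈ extensions R' then 1 else 0) =
      (#(extensions R ∩ extensions R') : ℂ) := by
    simp only [ite_zero_mul_ite_zero, mul_one, ← mem_inter, sum_boole, filter_univ_mem]
  calc inner ℂ (relState R) (relState R')
      = a * b * (c * c) *
          ((∑ π, (if π ∈ extensions R then 1 else 0) * (if π ∈ extensions R' then 1 else 0)) *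
            ∑ f, walsh ℂ (relDom R) f * walsh ℂ (relDom R') f) := by
        rw [PiLp.inner_apply, Fintype.sum_mul_sum, ← Fintype.sum_prod_type', mul_sum]
        refine sum_congr rfl fun q _ ↦ ?_
        simp only [relState, walsh, RCLike.inner_apply, map_mul, map_inv₀, Complex.conj_ofReal,
          map_pow, map_neg, map_one, apply_ite (starRingEnd ℂ), map_zero, a, b, c]
        ring
    _ = a * b * if relDom R = relDom R' then (#(extensions R ∩ extensions R') : ℂ) else 0 := by
        rw [hperm, sum_walsh_mul_walsh]
        split_ifs
        · linear_combination a * b * #(extensions R ∩ extensions R') * hc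
        · simp only [mul_zero]

theorem inner_relState_of_ne (h : R ≠ R') : inner ℂ (relState R) (relState R') = 0 := by
  rw [inner_relState]
  split_ifs with hdom
  · have : extensions R ∩ extensions R' = ∅ := by
      refine eq_empty_of_forall_notMem fun π hπ ↦ h ?_
      exact eq_of_relDom_eq_of_mem_extensions hdom (mem_inter.1 hπ).1 (mem_inter.1 hπ).2
    simp [this]
  · exact mul_zero _

theorem IsBijRel.inner_relState_self (hR : IsBijRel R) :
    inner ℂ (relState R) (relState R) = 1 := by
  have hne : ((Fintype.card α - #R)! : ℂ) ≠ 0 := Nat.cast_ne_zero.2 (Nat.factorial_ne_zero _)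
  rw [inner_relState, if_pos rfl, inter_self, hR.card_extensions, ← mul_inv, ← Complex.ofReal_mul,
    Real.mul_self_sqrt (Nat.cast_nonneg _), Complex.ofReal_natCast, inv_mul_cancel₀ hne]

theorem pf_relation_states_orthonormal_general :
    Orthonormal ℂ fun R : {R : Finset (α × α) // IsBijRel R} ↦ relState R.1 := by
  refine orthonormal_iff_ite.2 fun R R' ↦ ?_
  split_ifs with h
  · rw [h, R'.2.inner_relState_self]
  · exact inner_relState_of_ne (Subtype.coe_ne_coe.2 h)

end RelState

namespace IsBijTuple

variable {N t : ℕ} {p : Fin t → Fin N × Fin N}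

lemma injective (hp : IsBijTuple p) : Function.Injective p :=
  hp.1.of_comp

/-- The relation of a bijective tuple. It is a `Finset.map` rather than an image, so that no
deduplication stands between its underlying multiset and the entries of the tuple. -/
def rel (hp : IsBijTuple p) : Finset (Fin N × Fin N) :=
  univ.map ⟨p, hp.injective⟩

lemma rel_val (hp : IsBijTuple p) : hp.rel.val = List.ofFn p :=
  Fin.univ_val_map p

lemma isBijRel_rel (hp : IsBijTuple p) : IsBijRel hp.rel := by
  simp only [IsBijRel, rel, coe_map, Function.Embedding.coeFn_mk, coe_univ, Set.image_univ]
  exact ⟨hp.1.injOn_range, hp.2.injOn_range⟩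

lemma pfVec_eq_relState (hp : IsBijTuple p) : pfVec N t p = relState hp.rel := by
  ext ⟨π, f⟩
  have hsum : ∑ x ∈ relDom hp.rel, (f x : ℕ) = ∑ i, (f (p i).1 : ℕ) := by
    rw [relDom, sum_image hp.isBijRel_rel.1, rel, sum_map]
    rfl
  have hext : π ∈ extensions hp.rel ↔ ∀ i, π (p i).1 = (p i).2 := by
    simp [mem_extensions, rel]
  have hcard : #hp.rel = t := by
    rw [rel, card_map, card_fin]
  simp only [pfVec, relState, walsh, hsum, hext, hcard, Fintype.card_fin]

end IsBijTuple

/-- **Orthonormality of the pf-relation states (binary phases).** For bijective tuples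
`p, p'` of lengths `t, t' ≤ N`, `⟨pf_{p'}, pf_p⟩ = 1` if `p` and `p'` are equal as
multisets of pairs, and `= 0` otherwise. -/
theorem pf_relation_states_orthonormal (N t t' : ℕ) (hN : 1 ≤ N)
    (ht : t ≤ N) (ht' : t' ≤ N)
    (p : Fin t → Fin N × Fin N) (p' : Fin t' → Fin N × Fin N)
    (hp : IsBijTuple p) (hp' : IsBijTuple p') :
    (∑ q : Equiv.Perm (Fin N) × (Fin N → Fin 2),
        (starRingEnd ℂ) (pfVec N t' p' q) * pfVec N t p q)
      = if (List.ofFn p : Multiset (Fin N × Fin N)) = (List.ofFn p' : Multiset (Fin N × Fin N))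
        then 1 else 0 := by
  have horth := orthonormal_iff_ite.1 pf_relation_states_orthonormal_general
    ⟨hp'.rel, hp'.isBijRel_rel⟩ ⟨hp.rel, hp.isBijRel_rel⟩
  rw [hp.pfVec_eq_relState, hp'.pfVec_eq_relState, ← hp.rel_val, ← hp'.rel_val]
  simpa [PiLp.inner_apply, mul_comm, eq_comm (a := hp.rel)] using horth
end

section
/- Action of the purified permutation-function oracle on pf-relation states. Let N ≥ 1 and 0 ≤ t < N. Let pfo be the unitary on ℓ²([N] × S_N × {0,1}^{[N]}) determined on the standard basis by pfo(δ_{(x,π,f)}) = (−1)^{f(x)} · δ_{(π(x),π,f)}. For a tuple p = ((x_1,y_1),…,(x_t,y_t)) ∈ ([N]×[N])^t define pf_p ∈ ℓ²(S_N × {0,1}^{[N]}) by pf_p(π,f) := (1/√((N−t)!)) · 𝟙[π(x_i)=y_i for all i ∈ [t]] · (1/√(2^N)) · (−1)^{f(x_1)+⋯+f(x_t)}. Then for every x ∈ [N]: pfo(δ_x ⊗ pf_p) = (1/√(N−t)) · Σ_{y∈[N]} δ_y ⊗ pf_{p⌢(x,y)}, where p⌢(x,y) is the tuple p with the pair (x,y)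 appended (so the right-hand pf-states carry the normalization 1/√((N−t−1)!)). -/
/-!
Since `(x, π, f) ↦ (π x, π, f)` is injective, the coefficient of `pfo v` at `(π z, π, f)` comes from
the single basis vector `δ_{(z, π, f)}`, so it equals `(-1)^{f(z)} v(z, π, f)`. For `v = δ_x ⊗ pf_p`
this vanishes unless `z = x`, that is, unless `π x = π z`, which is the constraint that the pair
`(x, π z)` adds to `pf_p`; the sign `(-1)^{f(x)}` is the summand that it adds to the exponent.
-/

open Finset

/-- The standard basis vector `δ_a` of `ℓ²(X)`. -/
def deltaVec {X : Type*} [DecidableEq X] (a : X) : X → ℂ :=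
  fun b => if b = a then 1 else 0

section BasisImages

variable {R X Y : Type*} [Semiring R] [Finite X] [DecidableEq X] [DecidableEq Y]

theorem map_apply_of_map_single {σ : X → Y} (hσ : σ.Injective) {c : X → R}
    {T : (X → R) →ₗ[R] (Y → R)}
    (hT : ∀ a, T (Pi.single a 1) = c a • Pi.single (σ a) 1) (v : X → R) (a : X) :
    T v (σ a) = v a * c a := by
  have := Fintype.ofFinite X
  calc T v (σ a) = ∑ b, v b * (c b * (Pi.single (σ b) 1 : Y → R) (σ a)) := by
        conv_lhs => rw [pi_eq_sum_univ' v]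
        simp only [map_sum, map_smul, hT, Finset.sum_apply, Pi.smul_apply, smul_eq_mul]
    _ = ∑ b, if a = b then v b * c b else 0 := by
        simp only [Pi.single_apply, hσ.eq_iff, mul_ite, mul_one, mul_zero]
    _ = v a * c a := by
        simp only [sum_ite_eq, mem_univ, if_true]

end BasisImages

theorem deltaVec_eq_single {X : Type*} [DecidableEq X] (a : X) : deltaVec a = Pi.single a 1 := by
  funext b
  rw [deltaVec, Pi.single_apply]

theorem perm_apply_prodMk_injective {X F : Type*} :
    Function.Injective fun q : X × Equiv.Perm X × F => (q.2.1 q.1, q.2) := by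
  rintro ⟨x, π, f⟩ ⟨x', π', f'⟩ h
  obtain ⟨hx, rfl, rfl⟩ : π x = π' x' ∧ π = π' ∧ f = f' := by simpa only [Prod.mk.injEq] using h
  rw [π.injective hx]

theorem sqrt_factorial_sub {N t : ℕ} (ht : t < N) :
    √((N - t).factorial : ℝ) = √(N - t : ℝ) * √((N - (t + 1)).factorial : ℝ) := by
  rw [← Nat.mul_factorial_pred (Nat.sub_ne_zero_of_lt ht), Nat.sub_sub, Nat.cast_mul,
    Nat.cast_sub ht.le, Real.sqrt_mul (sub_nonneg.2 (Nat.cast_le.2 ht.le))]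

theorem inv_sqrt_mul_pfVec_snoc {N t : ℕ} (ht : t < N) (p : Fin t → Fin N × Fin N) (x y : Fin N)
    (π : Equiv.Perm (Fin N)) (f : Fin N → Fin 2) :
    (√(N - t : ℝ) : ℂ)⁻¹ * pfVec N (t + 1) (Fin.snoc p (x, y)) (π, f) =
      if π x = y then pfVec N t p (π, f) * (-1) ^ (f x : ℕ) else 0 := by
  simp only [pfVec, sqrt_factorial_sub ht, Fin.forall_fin_succ', Fin.sum_univ_castSucc,
    Fin.snoc_castSucc, Fin.snoc_last, pow_add, Complex.ofReal_mul, mul_inv]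
  by_cases hxy : π x = y
  · simp only [hxy, and_true, if_true]
    ring
  · simp only [hxy, and_false, if_false, mul_zero, zero_mul]

/-- **Action of the purified permutation-function oracle on pf-relation states.**
If `T` is the linear map determined on the standard basis of
`ℓ²([N] × S_N × {0,1}^{[N]})` by `T δ_{(x,π,f)} = (−1)^{f(x)} δ_{(π(x),π,f)}`,
then for `0 ≤ t < N`, every tuple `p` of length `t` and every `x ∈ [N]`,
`T (δ_x ⊗ pf_p) = (1/√(N−t)) Σ_y δ_y ⊗ pf_{p⌢(x,y)}`. -/
theorem pfo_action_on_pf_states (N t : ℕ) (hN : 1 ≤ N) (ht : t < N)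
    (p : Fin t → Fin N × Fin N) (x : Fin N)
    (T : ((Fin N × Equiv.Perm (Fin N) × (Fin N → Fin 2)) → ℂ) →ₗ[ℂ]
          ((Fin N × Equiv.Perm (Fin N) × (Fin N → Fin 2)) → ℂ))
    (hT : ∀ (x' : Fin N) (π : Equiv.Perm (Fin N)) (f : Fin N → Fin 2),
      T (deltaVec (x', π, f)) = ((-1 : ℂ) ^ ((f x' : ℕ))) • deltaVec (π x', π, f)) :
    T (fun q => deltaVec x q.1 * pfVec N t p q.2) =
      fun q => (Real.sqrt (N - t) : ℂ)⁻¹ * pfVec N (t + 1) (Fin.snoc p (x, q.1)) q.2 := by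
  simp only [deltaVec_eq_single] at hT
  have oracle_apply (v) (z : Fin N) (π : Equiv.Perm (Fin N)) (f : Fin N → Fin 2) :
      T v (π z, π, f) = v (z, π, f) * (-1) ^ (f z : ℕ) :=
    map_apply_of_map_single perm_apply_prodMk_injective
      (fun q : Fin N × Equiv.Perm (Fin N) × (Fin N → Fin 2) => hT q.1 q.2.1 q.2.2) v (z, π, f)
  funext ⟨y, π, f⟩
  obtain ⟨z, rfl⟩ := π.surjective y
  rw [oracle_apply, inv_sqrt_mul_pfVec_snoc ht]
  rcases eq_or_ne z x with rfl | hz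
  · rw [deltaVec, if_pos rfl, if_pos rfl, one_mul]
  · rw [deltaVec, if_neg hz, if_neg (π.injective.ne hz.symm), zero_mul, zero_mul]
end

section
/- The path-recording oracle is a partial isometry on injective relation states. Let N ≥ 1 and 0 ≤ t < N. For x ∈ [N] and an injective tuple p = ((x_1,y_1),…,(x_t,y_t)) ∈ ([N]×[N])^t (i.e., y_1,…,y_t pairwise distinct), define W(x,p) := (1/√(N−t)) · Σ_{y∈[N], y∉{y_1,…,y_t}} e_y ⊗ |p⌢(x,y)⟩_rel ∈ ℂ^N ⊗ (ℂ^N⊗ℂ^N)^{⊗(t+1)}, where p⌢(x,y) is p with (x,y) appended and |q⟩_rel := (1/√((t+1)!)) Σ_{π∈S_{t+1}} ⊗_{i=1}^{t+1} (e_{x_{π^{-1}(i)}} ⊗ e_{y_{π^{-1}(i)}}) for a tuple q = ((x_i,y_i))_{i=1}^{t+1} with pairwise distinct pairs. Then for all x, x' ∈ [N] and injective tuples p, p' of length t: ⟨W(x',p'), W(x,p)⟩ = 1 if x = x' and p, p' are equal as multisets of pairs, and ⟨W(x',p'), W(x,p)⟩ = 0 otherwise. -/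
/-!
Expanding both symmetrizations, `⟨q'|q⟩_rel` counts the permutations carrying `q` to `q'`. If `q` is
injective there is at most one of them, and it exists exactly when `q` and `q'` are reorderings of
each other, so relation states of injective tuples are orthonormal, indexed by multisets.

Slice `⟨W(x',p'), W(x,p)⟩` along the output register `y`. When `y` is a `y`-coordinate of neither
`p` nor `p'`, the appended pair is the only one with second coordinate `y`, so `p⌢(x,y)` and
`p'⌢(x',y)` agree as multisets iff `x = x'` and `p`, `p'` agree as multisets. In that case each of
the `N - t` fresh values of `y` contributes `1 / (N - t)`; otherwise every slice vanishes.
-/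

open Finset

/-- The normalized relation state `|q⟩_rel` of a tuple `q` with pairwise distinct pairs,
written entrywise: `|q⟩_rel = (1/√(s!)) Σ_{π ∈ S_s} ⊗_i e_{q(π⁻¹(i))}`. -/
noncomputable def relStateVec (N s : ℕ) (q : Fin s → Fin N × Fin N) :
    (Fin s → Fin N × Fin N) → ℂ :=
  fun r => (Real.sqrt (s.factorial) : ℂ)⁻¹ *
    ∑ π : Equiv.Perm (Fin s), if (fun i => q (π⁻¹ i)) = r then 1 else 0

/-- The image `W(x,p) = (1/√(N−t)) Σ_{y ∉ Im p} e_y ⊗ |p⌢(x,y)⟩_rel` of the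
path-recording oracle on `e_x ⊗ |p⟩_rel`, written entrywise. -/
noncomputable def pathRecVec (N t : ℕ) (x : Fin N) (p : Fin t → Fin N × Fin N) :
    Fin N × (Fin (t + 1) → Fin N × Fin N) → ℂ :=
  fun zr => (Real.sqrt (N - t) : ℂ)⁻¹ *
    (if ∃ i, (p i).2 = zr.1 then 0 else relStateVec N (t + 1) (Fin.snoc p (x, zr.1)) zr.2)

section Reorderings

variable {α : Type*} {s : ℕ}

theorem coe_ofFn_snoc (q : Fin s → α) (a : α) :
    (List.ofFn (Fin.snoc q a : Fin (s + 1) → α) : Multiset α) =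
      a ::ₘ (List.ofFn q : Multiset α) := by
  rw [List.ofFn_succ']
  simp [List.concat_eq_append]

theorem exists_comp_perm_eq_of_coe_ofFn_eq {q q' : Fin s → α} (hq : Function.Injective q)
    (h : (List.ofFn q : Multiset α) = List.ofFn q') :
    ∃ π : Equiv.Perm (Fin s), q ∘ π = q' := by
  have hperm : (List.ofFn q).Perm (List.ofFn q') := Multiset.coe_eq_coe.mp h
  have hq' : Function.Injective q' :=
    List.nodup_ofFn.mp (hperm.nodup (List.nodup_ofFn.mpr hq))
  have hmem : ∀ i, ∃ j, q j = q' i := fun i =>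
    List.mem_ofFn.mp (hperm.mem_iff.mpr (List.mem_ofFn.mpr ⟨i, rfl⟩))
  choose f hf using hmem
  have hf_inj : Function.Injective f :=
    Function.Injective.of_comp (f := q) (by rwa [show q ∘ f = q' from funext hf])
  exact ⟨Equiv.ofBijective f (Finite.injective_iff_bijective.mp hf_inj), funext hf⟩

theorem card_filter_comp_perm_eq [DecidableEq α] {q : Fin s → α} (hq : Function.Injective q)
    (q' : Fin s → α) :
    #{π : Equiv.Perm (Fin s) | q ∘ π = q'} =
      if (List.ofFn q : Multiset α) = List.ofFn q' then 1 else 0 := by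
  split_ifs with h
  · obtain ⟨σ, rfl⟩ := exists_comp_perm_eq_of_coe_ofFn_eq hq h
    refine card_eq_one.mpr ⟨σ, ?_⟩
    ext π
    simp [hq.comp_left.eq_iff]
  · refine card_eq_zero.mpr (filter_eq_empty_iff.mpr ?_)
    rintro π - rfl
    exact h (Multiset.coe_eq_coe.mpr (π.ofFn_comp_perm q).symm)

end Reorderings

section FreshOutputs

variable {α β : Type*} [Fintype β] [DecidableEq β]

/-- The outputs `y` not yet recorded in the relation `R`, i.e. `y ∉ {y_1, …, y_t}` for
`R = {(x_1, y_1), …, (x_t, y_t)}`. A multiset encodes the relation because `|p⟩_rel` forgets the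
order of `p`. -/
def freshOutputs (R : Multiset (α × β)) : Finset β := {y | y ∉ R.map Prod.snd}

theorem mem_freshOutputs {R : Multiset (α × β)} {y : β} :
    y ∈ freshOutputs R ↔ y ∉ R.map Prod.snd := by
  simp [freshOutputs]

theorem notMem_of_mem_freshOutputs {R : Multiset (α × β)} {y : β} (hy : y ∈ freshOutputs R)
    (x : α) : (x, y) ∉ R := fun h =>
  mem_freshOutputs.mp hy (Multiset.mem_map_of_mem Prod.snd h)

theorem mem_freshOutputs_ofFn {t : ℕ} {p : Fin t → α × β} {y : β} :
    y ∈ freshOutputs (List.ofFn p : Multiset (α × β)) ↔ ¬∃ i, (p i).2 = y := by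
  simp [mem_freshOutputs, List.mem_ofFn]

theorem card_freshOutputs {R : Multiset (α × β)} (hR : (R.map Prod.snd).Nodup) :
    #(freshOutputs R) = Fintype.card β - R.card := by
  have hcompl : freshOutputs R = (R.map Prod.snd).toFinsetᶜ := by
    ext y
    simp [mem_freshOutputs]
  rw [hcompl, card_compl, Multiset.toFinset_card_of_nodup hR, Multiset.card_map]

theorem cons_eq_cons_iff_of_mem_freshOutputs {R R' : Multiset (α × β)} {x x' : α} {y : β}
    (hy : y ∈ freshOutputs R') : (x, y) ::ₘ R = (x', y) ::ₘ R' ↔ x = x' ∧ R = R' := by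
  refine ⟨fun h => ?_, by rintro ⟨rfl, rfl⟩; rfl⟩
  have hmem : (x, y) ∈ (x', y) ::ₘ R' := h ▸ Multiset.mem_cons_self _ _
  obtain rfl : x = x' :=
    congrArg Prod.fst ((Multiset.mem_cons.mp hmem).resolve_right (notMem_of_mem_freshOutputs hy x))
  exact ⟨rfl, (Multiset.cons_inj_right _).mp h⟩

end FreshOutputs

theorem inv_ofReal_sqrt_mul_self {a : ℝ} (ha : 0 ≤ a) :
    (Real.sqrt a : ℂ)⁻¹ * (Real.sqrt a : ℂ)⁻¹ = (a : ℂ)⁻¹ := by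
  rw [← mul_inv, ← Complex.ofReal_mul, Real.mul_self_sqrt ha]

section InnerProducts

variable {N s t : ℕ}

theorem sum_conj_relStateVec_mul (q q' : Fin s → Fin N × Fin N) :
    ∑ r, (starRingEnd ℂ) (relStateVec N s q' r) * relStateVec N s q r =
      #{π : Equiv.Perm (Fin s) | q ∘ π = q'} := by
  have hcount (ρ : Equiv.Perm (Fin s)) :
      ∑ π : Equiv.Perm (Fin s), (if q ∘ ⇑π⁻¹ = q' ∘ ⇑ρ⁻¹ then (1 : ℂ) else 0) =
        #{π : Equiv.Perm (Fin s) | q ∘ π = q'} := by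
    rw [← sum_boole]
    refine Fintype.sum_equiv ((Equiv.inv _).trans (Equiv.mulRight ρ)) _ _ fun π => ?_
    have hiff : q ∘ ⇑π⁻¹ = q' ∘ ⇑ρ⁻¹ ↔ q ∘ ⇑(π⁻¹ * ρ) = q' := by
      rw [Equiv.Perm.coe_mul, ← Function.comp_assoc]
      exact Equiv.eq_comp_symm ρ _ _
    exact if_congr hiff rfl rfl
  calc ∑ r, (starRingEnd ℂ) (relStateVec N s q' r) * relStateVec N s q r
      = (s.factorial : ℂ)⁻¹ * ∑ ρ : Equiv.Perm (Fin s), ∑ π : Equiv.Perm (Fin s),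
          if q ∘ ⇑π⁻¹ = q' ∘ ⇑ρ⁻¹ then 1 else 0 := by
        simp_rw [relStateVec, map_mul, map_inv₀, map_sum, apply_ite (starRingEnd ℂ), map_one,
          map_zero, Complex.conj_ofReal, mul_mul_mul_comm,
          inv_ofReal_sqrt_mul_self (Nat.cast_nonneg _), ← mul_sum, sum_mul, ite_mul, one_mul,
          zero_mul]
        rw [sum_comm]
        simp [Function.comp_def]
    _ = #{π : Equiv.Perm (Fin s) | q ∘ π = q'} := by
        simp_rw [hcount]
        simp [Fintype.card_perm, Nat.factorial_ne_zero]

theorem sum_conj_relStateVec_mul_of_injective {q : Fin s → Fin N × Fin N}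
    (hq : Function.Injective q) (q' : Fin s → Fin N × Fin N) :
    ∑ r, (starRingEnd ℂ) (relStateVec N s q' r) * relStateVec N s q r =
      if (List.ofFn q : Multiset (Fin N × Fin N)) = List.ofFn q' then 1 else 0 := by
  rw [sum_conj_relStateVec_mul, card_filter_comp_perm_eq hq, Nat.cast_ite, Nat.cast_one,
    Nat.cast_zero]

theorem pathRecVec_of_mem_freshOutputs {p : Fin t → Fin N × Fin N} {y : Fin N}
    (hy : y ∈ freshOutputs (List.ofFn p : Multiset (Fin N × Fin N))) (x : Fin N)
    (r : Fin (t + 1) → Fin N × Fin N) :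
    pathRecVec N t x p (y, r) =
      (Real.sqrt (N - t) : ℂ)⁻¹ * relStateVec N (t + 1) (Fin.snoc p (x, y)) r := by
  rw [pathRecVec, if_neg (mem_freshOutputs_ofFn.mp hy)]

theorem pathRecVec_of_notMem_freshOutputs {p : Fin t → Fin N × Fin N} {y : Fin N}
    (hy : y ∉ freshOutputs (List.ofFn p : Multiset (Fin N × Fin N))) (x : Fin N)
    (r : Fin (t + 1) → Fin N × Fin N) :
    pathRecVec N t x p (y, r) = 0 := by
  rw [pathRecVec, if_pos (not_not.mp (mt mem_freshOutputs_ofFn.mpr hy)), mul_zero]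

theorem sum_conj_pathRecVec_mul_slice (htN : t ≤ N) {p : Fin t → Fin N × Fin N}
    (hp : Function.Injective p) (p' : Fin t → Fin N × Fin N) (x x' y : Fin N) :
    ∑ r, (starRingEnd ℂ) (pathRecVec N t x' p' (y, r)) * pathRecVec N t x p (y, r) =
      if y ∈ freshOutputs (List.ofFn p : Multiset (Fin N × Fin N)) ∧ x = x' ∧
          (List.ofFn p : Multiset (Fin N × Fin N)) = List.ofFn p'
        then ((N : ℂ) - t)⁻¹ else 0 := by
  by_cases hy : y ∈ freshOutputs (List.ofFn p : Multiset (Fin N × Fin N))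
  swap
  · simp [pathRecVec_of_notMem_freshOutputs hy, hy]
  by_cases hy' : y ∈ freshOutputs (List.ofFn p' : Multiset (Fin N × Fin N))
  swap
  · have hne : (List.ofFn p : Multiset (Fin N × Fin N)) ≠ List.ofFn p' := fun h => hy' (h ▸ hy)
    simp only [pathRecVec_of_notMem_freshOutputs hy', map_zero, zero_mul, sum_const_zero, hne,
      and_false, if_false]
  have hsnoc : Function.Injective (Fin.snoc p (x, y) : Fin (t + 1) → Fin N × Fin N) :=
    Fin.snoc_injective_iff.mpr ⟨hp, fun ⟨i, hi⟩ =>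
      mem_freshOutputs_ofFn.mp hy ⟨i, congrArg Prod.snd hi⟩⟩
  have hnorm : (Real.sqrt (N - t) : ℂ)⁻¹ * (Real.sqrt (N - t) : ℂ)⁻¹ = ((N : ℂ) - t)⁻¹ := by
    rw [inv_ofReal_sqrt_mul_self (sub_nonneg.mpr (by exact_mod_cast htN)), Complex.ofReal_sub,
      Complex.ofReal_natCast, Complex.ofReal_natCast]
  simp_rw [pathRecVec_of_mem_freshOutputs hy, pathRecVec_of_mem_freshOutputs hy', map_mul,
    map_inv₀, Complex.conj_ofReal, mul_mul_mul_comm, hnorm, ← mul_sum,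
    sum_conj_relStateVec_mul_of_injective hsnoc, coe_ofFn_snoc,
    cons_eq_cons_iff_of_mem_freshOutputs hy', hy, true_and, mul_ite, mul_one, mul_zero]

end InnerProducts

theorem path_recording_partial_isometry_general {N t : ℕ} (ht : t < N) (x x' : Fin N)
    (p p' : Fin t → Fin N × Fin N) (hp : Function.Injective fun i => (p i).2) :
    (∑ zr : Fin N × (Fin (t + 1) → Fin N × Fin N),
        (starRingEnd ℂ) (pathRecVec N t x' p' zr) * pathRecVec N t x p zr)
      = if x = x' ∧
          (List.ofFn p : Multiset (Fin N × Fin N)) = (List.ofFn p' : Multiset (Fin N × Fin N))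
        then 1 else 0 := by
  have hp_inj : Function.Injective p := fun _ _ h => hp (congrArg Prod.snd h)
  have hnodup : ((List.ofFn p : Multiset (Fin N × Fin N)).map Prod.snd).Nodup := by
    rw [Multiset.map_coe, List.map_ofFn]
    exact List.nodup_ofFn.mpr hp
  have hcard : #(freshOutputs (List.ofFn p : Multiset (Fin N × Fin N))) = N - t := by
    rw [card_freshOutputs hnodup, Multiset.coe_card, List.length_ofFn, Fintype.card_fin]
  have hne : (N : ℂ) - t ≠ 0 := sub_ne_zero.mpr (by exact_mod_cast ht.ne')
  simp_rw [Fintype.sum_prod_type, sum_conj_pathRecVec_mul_slice ht.le hp_inj]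
  split_ifs with h
  · simp only [h, and_true]
    rw [← h.2, sum_ite_mem, univ_inter, sum_const, hcard, nsmul_eq_mul, Nat.cast_sub ht.le,
      mul_inv_cancel₀ hne]
  · simp only [h, and_false, if_false, sum_const_zero]

/-- **The path-recording oracle is a partial isometry on injective relation states.**
For `0 ≤ t < N`, `x, x' ∈ [N]` and injective tuples `p, p'` of length `t`,
`⟨W(x',p'), W(x,p)⟩ = 1` if `x = x'` and `p, p'` agree as multisets of pairs, and `= 0`
otherwise. -/
theorem path_recording_partial_isometry (N t : ℕ) (hN : 1 ≤ N) (ht : t < N)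
    (x x' : Fin N) (p p' : Fin t → Fin N × Fin N)
    (hp : Function.Injective fun i => (p i).2)
    (hp' : Function.Injective fun i => (p' i).2) :
    (∑ zr : Fin N × (Fin (t + 1) → Fin N × Fin N),
        (starRingEnd ℂ) (pathRecVec N t x' p' zr) * pathRecVec N t x p zr)
      = if x = x' ∧
          (List.ofFn p : Multiset (Fin N × Fin N)) = (List.ofFn p' : Multiset (Fin N × Fin N))
        then 1 else 0 :=
  path_recording_partial_isometry_general ht x x' p p' hp
end

section
/- Orthonormality of ternary pf-relation states. Let N ≥ 1 and let ω₃ := exp(2πi/3). For tuples L = ((x_1,y_1),…,(x_ℓ,y_ℓ)) and R = ((x'_1,y'_1),…,(x'_r,y'_r)) in [N]×[N] with ℓ+r ≤ N, define pf_{L,R} ∈ ℓ²(S_N × ({0,1,2}^{[N]})) by pf_{L,R}(π,f) := (1/√((N−ℓ−r)!)) · 𝟙[π(x)=y for every pair (x,y) occurring in L or R] · (1/√(3^N)) · ω₃^{f(x_1)+⋯+f(x_ℓ) − (f(x'_1)+⋯+f(x'_r))}. Then for any two pairs of tuples (L,R) and (L',R') such that the concatenations L⌢R and L'⌢R' are bijective,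 ⟨pf_{L',R'}, pf_{L,R}⟩ equals 1 if L, L' are equal as multisets of pairs and R, R' are equal as multisets of pairs, and equals 0 otherwise. -/
/-!
A pf state is a product of a vector on permutations, the normalised indicator of the permutations
extending the prescribed pairs, and a vector on functions `f`, the character
`f ↦ ω₃ ^ ∑ x, c x * f x`, where `c x` counts the occurrences of `x` as a first coordinate in `L`
minus those in `R`. Inner products factor accordingly.

Two characters are orthogonal unless `c ≡ c'` modulo `3`. By bijectivity each `c x` is `1`, `-1` or
`0`, and these are distinct modulo `3`, so `c ≡ c'` forces `L` and `L'`, and likewise `R` and `R'`,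
to have the same first coordinates. If moreover the two indicators overlap, then some permutation
determines the second coordinates from the first, and the pairs agree. The norm is `1` since a
partial bijection with `t` pairs has `(N - t)!` extensions to a permutation.
-/

open Finset

/-- `ω₃ = exp(2πi/3)`. -/
noncomputable def omega3 : ℂ := Complex.exp (2 * Real.pi * Complex.I / 3)

/-- The ternary pf-relation vector `pf_{L,R} ∈ ℓ²(S_N × {0,1,2}^{[N]})`:
`pf_{L,R}(π,f) = (1/√((N−ℓ−r)!)) · 𝟙[π x = y for all (x,y) in L or R] · (1/√(3^N)) ·
ω₃^{Σ_{(x,y)∈L} f(x) − Σ_{(x,y)∈R} f(x)}`. -/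
noncomputable def pf3Vec (N ℓ r : ℕ) (L : Fin ℓ → Fin N × Fin N)
    (R : Fin r → Fin N × Fin N) :
    Equiv.Perm (Fin N) × (Fin N → Fin 3) → ℂ :=
  fun q =>
    (Real.sqrt ((N - (ℓ + r)).factorial) : ℂ)⁻¹ *
      (if (∀ i, q.1 (L i).1 = (L i).2) ∧ (∀ j, q.1 (R j).1 = (R j).2) then 1 else 0) *
      (Real.sqrt (3 ^ N) : ℂ)⁻¹ *
      omega3 ^ ((∑ i, ((q.2 (L i).1 : ℕ) : ℤ)) - ∑ j, ((q.2 (R j).1 : ℕ) : ℤ))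

section CharacterSums

lemma zpow_sum_eq_prod {G₀ : Type*} [CommGroupWithZero G₀] {z : G₀} (hz : z ≠ 0) {ι : Type*}
    (s : Finset ι) (g : ι → ℤ) : z ^ ∑ x ∈ s, g x = ∏ x ∈ s, z ^ g x := by
  classical
  induction s using Finset.induction_on with
  | empty => simp
  | insert x s hx ih => rw [sum_insert hx, prod_insert hx, zpow_add₀ hz, ih]

variable {K : Type*} [Field K] {ζ : K} {k : ℕ}

lemma sum_zpow_mul_val (hζ : IsPrimitiveRoot ζ k) (d : ℤ) :
    ∑ a : Fin k, ζ ^ (d * (a : ℕ)) = if (k : ℤ) ∣ d then (k : K) else 0 := by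
  have hgeom : ∑ a : Fin k, ζ ^ (d * (a : ℕ)) = ∑ i ∈ range k, (ζ ^ d) ^ i := by
    simp only [zpow_mul, zpow_natCast, Fin.sum_univ_eq_sum_range (fun i => (ζ ^ d) ^ i)]
  have hpow : (ζ ^ d) ^ k = 1 := by
    rw [← zpow_natCast, zpow_comm, zpow_natCast, hζ.pow_eq_one, one_zpow]
  rw [hgeom]
  split_ifs with hd
  · simp [(hζ.zpow_eq_one_iff_dvd d).2 hd]
  · rw [geom_sum_eq fun h => hd ((hζ.zpow_eq_one_iff_dvd d).1 h), hpow, sub_self, zero_div]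

lemma sum_pi_zpow_sum_mul_val [NeZero k] (hζ : IsPrimitiveRoot ζ k) {ι : Type*} [Fintype ι]
    [DecidableEq ι] (c : ι → ℤ) :
    ∑ f : ι → Fin k, ζ ^ ∑ x, c x * (f x : ℕ) =
      if ∀ x, (k : ℤ) ∣ c x then (k : K) ^ Fintype.card ι else 0 := by
  calc ∑ f : ι → Fin k, ζ ^ ∑ x, c x * (f x : ℕ)
      = ∑ f : ι → Fin k, ∏ x, ζ ^ (c x * (f x : ℕ)) := by
        simp only [zpow_sum_eq_prod (hζ.ne_zero (NeZero.ne k))]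
    _ = ∏ x, ∑ a : Fin k, ζ ^ (c x * (a : ℕ)) :=
        (Fintype.prod_sum fun x (a : Fin k) => ζ ^ (c x * (a : ℕ))).symm
    _ = _ := by simp only [sum_zpow_mul_val hζ, Fintype.prod_ite_zero, prod_const, card_univ]

end CharacterSums

lemma inv_ofReal_sqrt_mul_self_mul {x : ℝ} (hx : 0 < x) :
    (Real.sqrt x : ℂ)⁻¹ * (Real.sqrt x : ℂ)⁻¹ * x = 1 := by
  have hsq : (Real.sqrt x : ℂ) * Real.sqrt x = x := by
    rw [← Complex.ofReal_mul, Real.mul_self_sqrt hx.le]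
  rw [← mul_inv, hsq, inv_mul_cancel₀ (Complex.ofReal_ne_zero.2 hx.ne')]

section PhaseState

variable {α : Type*} [Fintype α] {k : ℕ}

/-- The normalised character `f ↦ ζ ^ ∑ x, c x * f x` on `{0, …, k - 1}^α`: the factor of a pf state
that depends on the function `f`. -/
noncomputable def phaseState (ζ : ℂ) (c : α → ℤ) (f : α → Fin k) : ℂ :=
  (Real.sqrt (k ^ Fintype.card α) : ℂ)⁻¹ * ζ ^ ∑ x, c x * (f x : ℕ)

lemma conj_phaseState_mul_phaseState [NeZero k] {ζ : ℂ} (hζ : IsPrimitiveRoot ζ k) (c c' : α → ℤ)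
    (f : α → Fin k) :
    (starRingEnd ℂ) (phaseState ζ c' f) * phaseState ζ c f =
      (Real.sqrt (k ^ Fintype.card α) : ℂ)⁻¹ * (Real.sqrt (k ^ Fintype.card α) : ℂ)⁻¹ *
        ζ ^ ∑ x, (c x - c' x) * (f x : ℕ) := by
  have hconj : (starRingEnd ℂ) ζ = ζ⁻¹ :=
    (Complex.inv_eq_conj (hζ.norm'_eq_one (NeZero.ne k))).symm
  have hexp : ∑ x, (c x - c' x) * ((f x : ℕ) : ℤ) =
      -∑ x, c' x * ((f x : ℕ) : ℤ) + ∑ x, c x * ((f x : ℕ) : ℤ) := by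
    simp only [sub_mul, sum_sub_distrib]
    ring
  rw [hexp, zpow_add₀ (hζ.ne_zero (NeZero.ne k)), phaseState, phaseState, map_mul, map_inv₀,
    Complex.conj_ofReal, map_zpow₀, hconj, inv_zpow']
  ring

lemma sum_conj_phaseState_mul_phaseState [DecidableEq α] [NeZero k] {ζ : ℂ}
    (hζ : IsPrimitiveRoot ζ k) (c c' : α → ℤ) :
    ∑ f : α → Fin k, (starRingEnd ℂ) (phaseState ζ c' f) * phaseState ζ c f =
      if ∀ x, (k : ℤ) ∣ c x - c' x then 1 else 0 := by
  have hk : (0 : ℝ) < (k : ℝ) ^ Fintype.card α := pow_pos (mod_cast NeZero.pos k) _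
  simp only [conj_phaseState_mul_phaseState hζ, ← mul_sum, sum_pi_zpow_sum_mul_val hζ, mul_ite,
    mul_zero]
  exact if_congr Iff.rfl (mod_cast inv_ofReal_sqrt_mul_self_mul hk) rfl

end PhaseState

/-- A multiset of pairs is a partial bijection if its first coordinates are pairwise distinct and
its second coordinates are pairwise distinct. -/
def IsPartialBij {α β : Type*} (P : Multiset (α × β)) : Prop :=
  (P.map Prod.fst).Nodup ∧ (P.map Prod.snd).Nodup

section Extensions

variable {α : Type*} [Fintype α] [DecidableEq α]

lemma card_perm_apply_eq {ι : Type*} [Fintype ι] {x y : ι → α} (hx : Function.Injective x)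
    (hy : Function.Injective y) :
    Fintype.card {π : Equiv.Perm α // ∀ i, π (x i) = y i} =
      (Fintype.card α - Fintype.card ι).factorial := by
  classical
  obtain ⟨π₀, hπ₀⟩ := Equiv.Perm.exists_extending_pair x y hx hy
  -- Left multiplication by `π₀⁻¹` turns the extensions into the permutations fixing `range x`.
  let e : {π : Equiv.Perm α // ∀ i, π (x i) = y i} ≃
      {σ : Equiv.Perm α // ∀ a, ¬ a ∉ Set.range x → σ a = a} :=
    (Equiv.mulLeft π₀⁻¹).subtypeEquiv fun π => by
      simp only [not_not, Set.forall_mem_range, Equiv.coe_mulLeft, Equiv.Perm.mul_apply,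
        Equiv.Perm.inv_eq_iff_eq, hπ₀]
  rw [Fintype.card_congr (e.trans (Equiv.Perm.subtypeEquivSubtypePerm _).symm),
    Fintype.card_perm, Fintype.card_subtype_compl, Fintype.card_congr (Equiv.ofInjective x hx)]

lemma card_perm_extending {P : Multiset (α × α)} (hP : IsPartialBij P) :
    #{π : Equiv.Perm α | ∀ p ∈ P, π p.1 = p.2} =
      (Fintype.card α - Multiset.card P).factorial := by
  have hfst : Function.Injective fun p : {p // p ∈ P.toFinset} => p.1.1 := fun p q h =>
    Subtype.ext <| Multiset.inj_on_of_nodup_map hP.1 _ (Multiset.mem_toFinset.1 p.2) _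
      (Multiset.mem_toFinset.1 q.2) h
  have hsnd : Function.Injective fun p : {p // p ∈ P.toFinset} => p.1.2 := fun p q h =>
    Subtype.ext <| Multiset.inj_on_of_nodup_map hP.2 _ (Multiset.mem_toFinset.1 p.2) _
      (Multiset.mem_toFinset.1 q.2) h
  rw [← Multiset.toFinset_card_of_nodup hP.1.of_map, ← Fintype.card_coe P.toFinset,
    ← card_perm_apply_eq hfst hsnd, Fintype.card_subtype]
  simp only [Subtype.forall, Multiset.mem_toFinset]

/-- The normalised indicator of the permutations sending `x` to `y` for every pair `(x, y)` in `P`: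
the factor of a pf state that depends on the permutation. -/
noncomputable def extensionState (P : Multiset (α × α)) (π : Equiv.Perm α) : ℂ :=
  (Real.sqrt (Fintype.card α - Multiset.card P).factorial : ℂ)⁻¹ *
    if ∀ p ∈ P, π p.1 = p.2 then 1 else 0

lemma sum_conj_extensionState_mul_self {P : Multiset (α × α)} (hP : IsPartialBij P) :
    ∑ π, (starRingEnd ℂ) (extensionState P π) * extensionState P π = 1 := by
  set n := (Fintype.card α - Multiset.card P).factorial with hn
  have hterm (π : Equiv.Perm α) :
      (starRingEnd ℂ) (extensionState P π) * extensionState P π =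
        (Real.sqrt n : ℂ)⁻¹ * (Real.sqrt n : ℂ)⁻¹ *
          if ∀ p ∈ P, π p.1 = p.2 then 1 else 0 := by
    rw [extensionState]
    split_ifs <;> simp [hn]
  rw [sum_congr rfl fun π _ => hterm π, ← mul_sum, sum_boole, card_perm_extending hP]
  exact mod_cast inv_ofReal_sqrt_mul_self_mul (x := n) (mod_cast Nat.factorial_pos _)

lemma apply_eq_of_extensionState_ne_zero {P : Multiset (α × α)} {π : Equiv.Perm α}
    (h : extensionState P π ≠ 0) : ∀ p ∈ P, π p.1 = p.2 := by
  by_contra hfail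
  exact h (by rw [extensionState, if_neg hfail, mul_zero])

lemma exists_perm_extending_of_sum_ne_zero {P P' : Multiset (α × α)}
    (h : ∑ π, (starRingEnd ℂ) (extensionState P' π) * extensionState P π ≠ 0) :
    ∃ π : Equiv.Perm α, (∀ p ∈ P, π p.1 = p.2) ∧ ∀ p ∈ P', π p.1 = p.2 := by
  obtain ⟨π, -, hπ⟩ := exists_ne_zero_of_sum_ne_zero h
  have hP' : extensionState P' π ≠ 0 := (map_ne_zero _).1 (left_ne_zero_of_mul hπ)
  exact ⟨π, apply_eq_of_extensionState_ne_zero (right_ne_zero_of_mul hπ),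
    apply_eq_of_extensionState_ne_zero hP'⟩

end Extensions

section NetCount

variable {α β : Type*} [DecidableEq α]

/-- The number of occurrences of `x` as a first coordinate in `A` minus that in `B`: the coefficient
of `f x` in the exponent of a pf state. -/
def netCount (A B : Multiset (α × β)) (x : α) : ℤ :=
  (A.map Prod.fst).count x - (B.map Prod.fst).count x

lemma sum_map_eq_sum_count_mul [Fintype α] {R : Type*} [NonAssocSemiring R] (m : Multiset α)
    (g : α → R) : (m.map g).sum = ∑ x, (m.count x : R) * g x := by
  rw [sum_multiset_map_count]
  simp only [nsmul_eq_mul]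
  exact sum_subset (subset_univ _) fun x _ hx => by simp_all

lemma sum_netCount_mul [Fintype α] (A B : Multiset (α × β)) (g : α → ℤ) :
    ∑ x, netCount A B x * g x = (A.map (g ∘ Prod.fst)).sum - (B.map (g ∘ Prod.fst)).sum := by
  simp only [netCount, sub_mul, sum_sub_distrib, ← sum_map_eq_sum_count_mul, Multiset.map_map]

/-- The net counts of a partial bijection lie in `{-1, 0, 1}`, and these values are distinct modulo
`k ≥ 3`. -/
lemma map_fst_eq_of_dvd_netCount_sub {k : ℕ} (hk : 3 ≤ k) {A B A' B' : Multiset (α × β)}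
    (h : ((A + B).map Prod.fst).Nodup) (h' : ((A' + B').map Prod.fst).Nodup)
    (hdvd : ∀ x, (k : ℤ) ∣ netCount A B x - netCount A' B' x) :
    A.map Prod.fst = A'.map Prod.fst ∧ B.map Prod.fst = B'.map Prod.fst := by
  simp only [Multiset.map_add, Multiset.nodup_iff_count_le_one, Multiset.count_add] at h h'
  have hcount (x : α) : (A.map Prod.fst).count x = (A'.map Prod.fst).count x ∧
      (B.map Prod.fst).count x = (B'.map Prod.fst).count x := by
    have hx := h x
    have hx' := h' x
    have hzero : netCount A B x - netCount A' B' x = 0 :=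
      Int.eq_zero_of_abs_lt_dvd (hdvd x) (by rw [abs_lt]; unfold netCount; omega)
    unfold netCount at hzero
    omega
  exact ⟨Multiset.ext.2 fun x => (hcount x).1, Multiset.ext.2 fun x => (hcount x).2⟩

end NetCount

lemma eq_of_map_fst_eq_of_graph {α β : Type*} {A A' : Multiset (α × β)} {g : α → β}
    (hA : ∀ p ∈ A, g p.1 = p.2) (hA' : ∀ p ∈ A', g p.1 = p.2)
    (hfst : A.map Prod.fst = A'.map Prod.fst) : A = A' := by
  have recover {C : Multiset (α × β)} (hC : ∀ p ∈ C, g p.1 = p.2) :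
      (C.map Prod.fst).map (fun x => (x, g x)) = C := by
    have hpair : ∀ p ∈ C, (p.1, g p.1) = p := fun p hp => Prod.ext rfl (hC p hp)
    exact (Multiset.map_map ..).trans ((Multiset.map_congr rfl hpair).trans C.map_id)
  rw [← recover hA, hfst, recover hA']

section PfState

variable {α : Type*} [Fintype α] [DecidableEq α] {k : ℕ}

/-- The normalised `k`-ary pf-relation state of two multisets of pairs over a finite set `α`, where
`ζ` is a `k`-th root of unity. It vanishes at `(π, f)` unless `π` sends `x` to `y` for every pair
`(x, y)` in `A` or `B`; a pair in `A` contributes `ζ ^ f x` to the phase and a pair in `B`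
contributes `ζ ^ (-f x)`. Multisets replace tuples because the order of the pairs is irrelevant. -/
noncomputable def pfState (ζ : ℂ) (A B : Multiset (α × α))
    (q : Equiv.Perm α × (α → Fin k)) : ℂ :=
  extensionState (A + B) q.1 * phaseState ζ (netCount A B) q.2

lemma sum_conj_pfState_mul_pfState (ζ : ℂ) (A B A' B' : Multiset (α × α)) :
    ∑ q : Equiv.Perm α × (α → Fin k), (starRingEnd ℂ) (pfState ζ A' B' q) * pfState ζ A B q =
      (∑ π, (starRingEnd ℂ) (extensionState (A' + B') π) * extensionState (A + B) π) *
        ∑ f : α → Fin k, (starRingEnd ℂ) (phaseState ζ (netCount A' B') f) *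
          phaseState ζ (netCount A B) f := by
  simp only [Fintype.sum_mul_sum, Fintype.sum_prod_type, pfState, map_mul, mul_mul_mul_comm]

theorem ternary_pf_states_orthonormal_general (hk : 3 ≤ k) {ζ : ℂ} (hζ : IsPrimitiveRoot ζ k)
    {A B A' B' : Multiset (α × α)} (h : IsPartialBij (A + B))
    (h' : ((A' + B').map Prod.fst).Nodup) :
    ∑ q : Equiv.Perm α × (α → Fin k), (starRingEnd ℂ) (pfState ζ A' B' q) * pfState ζ A B q =
      if A = A' ∧ B = B' then 1 else 0 := by
  have : NeZero k := ⟨by omega⟩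
  rw [sum_conj_pfState_mul_pfState, sum_conj_phaseState_mul_phaseState hζ]
  split_ifs with hdvd heq heq
  · obtain ⟨rfl, rfl⟩ := heq
    rw [sum_conj_extensionState_mul_self h, mul_one]
  · by_contra hne
    obtain ⟨π, hπ, hπ'⟩ := exists_perm_extending_of_sum_ne_zero (left_ne_zero_of_mul hne)
    obtain ⟨hA, hB⟩ := map_fst_eq_of_dvd_netCount_sub hk h.1 h' hdvd
    simp only [Multiset.mem_add, or_imp, forall_and] at hπ hπ'
    exact heq ⟨eq_of_map_fst_eq_of_graph hπ.1 hπ'.1 hA, eq_of_map_fst_eq_of_graph hπ.2 hπ'.2 hB⟩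
  · obtain ⟨rfl, rfl⟩ := heq
    exact absurd (fun x => by simp) hdvd
  · rw [mul_zero]

end PfState

lemma isPrimitiveRoot_omega3 : IsPrimitiveRoot omega3 3 := by
  simpa only [omega3, Nat.cast_ofNat] using Complex.isPrimitiveRoot_exp 3 three_ne_zero

section Tuples

variable {N ℓ r : ℕ}

lemma IsBijTuple.isPartialBij {p : Fin ℓ → Fin N × Fin N} (h : IsBijTuple p) :
    IsPartialBij (List.ofFn p : Multiset (Fin N × Fin N)) := by
  simp only [IsPartialBij, Multiset.map_coe, Multiset.coe_nodup, List.map_ofFn]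
  exact ⟨List.nodup_ofFn.2 h.1, List.nodup_ofFn.2 h.2⟩

lemma IsBijTuple.isPartialBij_add {L : Fin ℓ → Fin N × Fin N} {R : Fin r → Fin N × Fin N}
    (h : IsBijTuple (Fin.append L R)) :
    IsPartialBij
      ((List.ofFn L : Multiset (Fin N × Fin N)) + (List.ofFn R : Multiset (Fin N × Fin N))) := by
  rw [Multiset.coe_add, ← List.ofFn_fin_append]
  exact h.isPartialBij

lemma pf3Vec_eq_pfState (L : Fin ℓ → Fin N × Fin N) (R : Fin r → Fin N × Fin N) :
    pf3Vec N ℓ r L R = pfState omega3 (List.ofFn L) (List.ofFn R) := by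
  funext q
  simp only [pf3Vec, pfState, extensionState, phaseState, sum_netCount_mul]
  simp [or_imp, forall_and, List.sum_ofFn, mul_assoc]

end Tuples

/-- **Orthonormality of ternary pf-relation states.** For pairs of tuples `(L,R)` and
`(L',R')` whose concatenations are bijective, `⟨pf_{L',R'}, pf_{L,R}⟩ = 1` if `L,L'` agree
as multisets and `R,R'` agree as multisets, and `= 0` otherwise. -/
theorem ternary_pf_states_orthonormal (N ℓ r ℓ' r' : ℕ) (hN : 1 ≤ N)
    (hlen : ℓ + r ≤ N) (hlen' : ℓ' + r' ≤ N)
    (L : Fin ℓ → Fin N × Fin N) (R : Fin r → Fin N × Fin N)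
    (L' : Fin ℓ' → Fin N × Fin N) (R' : Fin r' → Fin N × Fin N)
    (hbij : IsBijTuple (Fin.append L R)) (hbij' : IsBijTuple (Fin.append L' R')) :
    (∑ q : Equiv.Perm (Fin N) × (Fin N → Fin 3),
        (starRingEnd ℂ) (pf3Vec N ℓ' r' L' R' q) * pf3Vec N ℓ r L R q)
      = if (List.ofFn L : Multiset (Fin N × Fin N)) = (List.ofFn L' : Multiset (Fin N × Fin N))
          ∧ (List.ofFn R : Multiset (Fin N × Fin N)) = (List.ofFn R' : Multiset (Fin N × Fin N))
        then 1 else 0 := by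
  rw [pf3Vec_eq_pfState, pf3Vec_eq_pfState]
  exact ternary_pf_states_orthonormal_general le_rfl isPrimitiveRoot_omega3
    hbij.isPartialBij_add hbij'.isPartialBij_add.1
end

section
/- Approximate commutation of the EPR projector with the distinctness projector. Let N ≥ 1 and let ℓ, r ≥ 0 be integers with ℓ + r ≤ N and r ≥ 1, and fix i ∈ [r]. On the space H := ℂ^N ⊗ (ℂ^N⊗ℂ^N)^{⊗ℓ} ⊗ (ℂ^N⊗ℂ^N)^{⊗r} (registers: the query register A, then ℓ 'L-slots' and r 'R-slots', each slot consisting of an x-factor and a y-factor), let Π^xydist be the diagonal projector (acting as identity on A) onto the span of those basis vectors whose ℓ+r x-entries are pairwise distinct and whose ℓ+r y-entries are pairwise distinct; let Π^eq_i := Σ_{u∈[N]} |e_u⟩⟨e_u|_A ⊗ |e_u⟩⟨e_u| on the x-factor of the i-th R-slot (identity elsewhere); and let Π^EPR_i := |EPR⟩⟨EPR| between A and the x-factor of the i-th R-slot (identity elsewhere), where EPR := (1/√N) Σ_{u∈[N]} e_u⊗e_u. Then ‖Π^xydist·(Π^eq_i − Π^EPR_i) − (Π^eq_i − Π^EPR_i)·Π^xydist‖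 ≤ √((ℓ+r)/N), where ‖·‖ is the operator norm. -/
/-!
The equality projector is diagonal, so it commutes with the distinctness projector `D`, and only
the commutator of `D` with the EPR projector `E` matters. In the row of `E` at a basis index `p`,
the nonzero entries equal `1/N` and sit at the indices obtained from `p` by overwriting both the
query entry and the x-entry of the `i`-th R-slot with a common `u : Fin N`. If `p` is distinct, the
result can fail to be distinct only when `u` collides with one of the `ℓ + r` x-entries of `p`.

The commutator keeps exactly the entries of `E` joining distinct to non-distinct indices, so its
absolute row sums are at most `(ℓ + r)/N` at distinct indices and at most `1` at the others. The
Schur test with these row sums as weights gives the geometric mean `√((ℓ + r)/N)`.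
-/

open Finset

/-- The `ℓ²` operator norm of a complex matrix. -/
noncomputable def opNorm {ι : Type*} [Fintype ι] [DecidableEq ι] (M : Matrix ι ι ℂ) : ℝ :=
  ‖(Matrix.toEuclideanCLM (𝕜 := ℂ) M : EuclideanSpace ℂ ι →L[ℂ] EuclideanSpace ℂ ι)‖

/-- Index of the space `ℂ^N ⊗ (ℂ^N⊗ℂ^N)^{⊗ℓ} ⊗ (ℂ^N⊗ℂ^N)^{⊗r}`:
the query register `A`, the `ℓ` L-slots and the `r` R-slots. -/
abbrev RegIdx (N ℓ r : ℕ) := Fin N × (Fin ℓ → Fin N × Fin N) × (Fin r → Fin N × Fin N)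

/-- The diagonal projector (identity on the query register) onto the span of basis vectors
whose `ℓ+r` x-entries are pairwise distinct and whose `ℓ+r` y-entries are pairwise
distinct. -/
noncomputable def xyDistProj (N ℓ r : ℕ) : Matrix (RegIdx N ℓ r) (RegIdx N ℓ r) ℂ :=
  Matrix.diagonal fun p =>
    if Function.Injective (Sum.elim (fun j => (p.2.1 j).1) fun j => (p.2.2 j).1) ∧
        Function.Injective (Sum.elim (fun j => (p.2.1 j).2) fun j => (p.2.2 j).2)
    then 1 else 0

/-- The equality projector `Π^eq_i = Σ_u |e_u⟩⟨e_u|_A ⊗ |e_u⟩⟨e_u|` between the query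
register and the x-factor of the `i`-th R-slot, identity elsewhere. -/
noncomputable def eqProjR (N ℓ r : ℕ) (i : Fin r) :
    Matrix (RegIdx N ℓ r) (RegIdx N ℓ r) ℂ :=
  Matrix.of fun p q =>
    if p.1 = q.1 ∧ (p.2.2 i).1 = p.1 ∧ (q.2.2 i).1 = p.1 ∧ (p.2.2 i).2 = (q.2.2 i).2 ∧
        (∀ j, j ≠ i → p.2.2 j = q.2.2 j) ∧ p.2.1 = q.2.1
    then 1 else 0

/-- The projector `Π^EPR_i = |EPR⟩⟨EPR|` between the query register and the x-factor of
the `i`-th R-slot, identity elsewhere, where `EPR = (1/√N) Σ_u e_u ⊗ e_u`. -/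
noncomputable def eprProjR (N ℓ r : ℕ) (i : Fin r) :
    Matrix (RegIdx N ℓ r) (RegIdx N ℓ r) ℂ :=
  Matrix.of fun p q =>
    if (p.2.2 i).1 = p.1 ∧ (q.2.2 i).1 = q.1 ∧ (p.2.2 i).2 = (q.2.2 i).2 ∧
        (∀ j, j ≠ i → p.2.2 j = q.2.2 j) ∧ p.2.1 = q.2.1
    then (N : ℂ)⁻¹ else 0

section MatrixNorm

open scoped Matrix.Norms.L2Operator

variable {m n 𝕜 : Type*} [Fintype n] [RCLike 𝕜]

theorem norm_mulVec_apply_sq_le (A : Matrix m n 𝕜) (v : n → 𝕜) {a : n → ℝ} (ha : ∀ j, 0 < a j)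
    (i : m) :
    ‖(A.mulVec v) i‖ ^ 2 ≤
      (∑ j, ‖A i j‖ * a j) * ∑ j, ‖A i j‖ * (‖v j‖ ^ 2 / a j) := by
  have htri : ‖(A.mulVec v) i‖ ≤ ∑ j, ‖A i j‖ * ‖v j‖ :=
    norm_sum_le_of_le _ fun j _ => (norm_mul _ _).le
  calc ‖(A.mulVec v) i‖ ^ 2 ≤ (∑ j, ‖A i j‖ * ‖v j‖) ^ 2 := by gcongr
    _ ≤ _ := sum_sq_le_sum_mul_sum_of_sq_le_mul _
      (fun j _ => mul_nonneg (norm_nonneg _) (ha j).le)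
      (fun j _ => mul_nonneg (norm_nonneg _) (div_nonneg (sq_nonneg _) (ha j).le))
      (fun j _ => le_of_eq (by have := (ha j).ne'; field_simp))

variable [DecidableEq n]

theorem l2_opNorm_le_sqrt_of_schur_test [Fintype m] (A : Matrix m n 𝕜) {a : n → ℝ} {b : m → ℝ}
    {C : ℝ} (ha : ∀ j, 0 < a j) (hrow : ∀ i, ∑ j, ‖A i j‖ * a j ≤ b i)
    (hcol : ∀ j, ∑ i, b i * ‖A i j‖ ≤ C * a j) : ‖A‖ ≤ √C := by
  refine ContinuousLinearMap.opNorm_le_bound _ (Real.sqrt_nonneg _) fun v => ?_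
  rw [EuclideanSpace.norm_eq, EuclideanSpace.norm_eq, ← Real.sqrt_mul' _ (by positivity)]
  refine Real.sqrt_le_sqrt ?_
  have hw (j : n) : 0 ≤ ‖v j‖ ^ 2 / a j := div_nonneg (sq_nonneg _) (ha j).le
  calc ∑ i, ‖(A.mulVec v) i‖ ^ 2
      ≤ ∑ i, b i * ∑ j, ‖A i j‖ * (‖v j‖ ^ 2 / a j) := sum_le_sum fun i _ =>
        (norm_mulVec_apply_sq_le A v ha i).trans <| mul_le_mul_of_nonneg_right (hrow i) <|
          sum_nonneg fun j _ => mul_nonneg (norm_nonneg _) (hw j)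
    _ = ∑ j, (∑ i, b i * ‖A i j‖) * (‖v j‖ ^ 2 / a j) := by
        simp only [mul_sum, sum_mul, mul_assoc]
        exact sum_comm
    _ ≤ ∑ j, C * a j * (‖v j‖ ^ 2 / a j) := sum_le_sum fun j _ =>
        mul_le_mul_of_nonneg_right (hcol j) (hw j)
    _ = C * ∑ j, ‖v j‖ ^ 2 := by
        rw [mul_sum]
        exact sum_congr rfl fun j _ => by have := (ha j).ne'; field_simp

theorem norm_commutator_diagonal_ite_apply (P : n → Prop) [DecidablePred P] (M : Matrix n n 𝕜)
    (i j : n) :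
    ‖(Matrix.diagonal (fun k => if P k then (1 : 𝕜) else 0) * M -
        M * Matrix.diagonal fun k => if P k then (1 : 𝕜) else 0) i j‖ =
      if (P i ↔ P j) then 0 else ‖M i j‖ := by
  rw [Matrix.sub_apply, Matrix.diagonal_mul, Matrix.mul_diagonal]
  by_cases hi : P i <;> by_cases hj : P j <;> simp [hi, hj]

theorem l2_opNorm_commutator_diagonal_ite_le (P : n → Prop) [DecidablePred P] {M : Matrix n n 𝕜}
    (hM : M.IsHermitian) {c s : ℝ} (hc : 0 ≤ c) (hs : 0 ≤ s)
    (hPc : ∀ i, P i → ∑ j with ¬ P j, ‖M i j‖ ≤ c) (hPs : ∀ i, ¬ P i → ∑ j with P j, ‖M i j‖ ≤ s) :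
    ‖Matrix.diagonal (fun k => if P k then (1 : 𝕜) else 0) * M -
        M * Matrix.diagonal fun k => if P k then (1 : 𝕜) else 0‖ ≤ √(c * s) := by
  have hsymm (i j : n) : ‖M i j‖ = ‖M j i‖ := by rw [← hM.apply, norm_star]
  refine l2_opNorm_le_sqrt_of_schur_test _ (a := 1) (b := fun i => if P i then c else s)
    (fun _ => one_pos) (fun i => ?_) fun j => ?_
  · simp only [norm_commutator_diagonal_ite_apply, Pi.one_apply, mul_one]
    by_cases hi : P i
    · simpa [hi, sum_filter, ite_not] using hPc i hi
    · simpa [hi, sum_filter] using hPs i hi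
  · simp only [norm_commutator_diagonal_ite_apply, Pi.one_apply, mul_one, hsymm _ j]
    by_cases hj : P j
    · calc _ = s * ∑ i with ¬ P i, ‖M j i‖ := by
            rw [sum_filter, mul_sum]
            exact sum_congr rfl fun i _ => by by_cases hi : P i <;> simp [hi, hj]
        _ ≤ s * c := by gcongr; exact hPc j hj
        _ = c * s := mul_comm _ _
    · calc _ = c * ∑ i with P i, ‖M j i‖ := by
            rw [sum_filter, mul_sum]
            exact sum_congr rfl fun i _ => by by_cases hi : P i <;> simp [hi, hj]
        _ ≤ c * s := by gcongr; exact hPs j hj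

theorem opNorm_eq_l2_opNorm (M : Matrix n n ℂ) : opNorm M = ‖M‖ := rfl

end MatrixNorm

theorem injective_update_of_forall_ne {α β : Type*} [DecidableEq α] {f : α → β}
    (hf : Function.Injective f) {a : α} {b : β} (hb : ∀ x, f x ≠ b) :
    Function.Injective (Function.update f a b) := by
  intro x y hxy
  grind [Function.update_apply, hf.eq_iff]

theorem card_not_injective_update_le {α β : Type*} [Fintype α] [DecidableEq α] [Fintype β]
    [DecidableEq β] {f : α → β} (hf : Function.Injective f) (a : α) :
    #{b | ¬ Function.Injective (Function.update f a b)} ≤ Fintype.card α := by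
  refine (card_le_card fun b hb => ?_).trans (card_image_le (s := univ) (f := f))
  by_contra hb'
  exact (mem_filter.1 hb).2 (injective_update_of_forall_ne hf (by simpa using hb'))

section EprCommutator

variable {N ℓ r : ℕ}

namespace RegIdx

/-- The x-entries of the `ℓ` L-slots followed by those of the `r` R-slots. -/
def xEntries (p : RegIdx N ℓ r) : Fin ℓ ⊕ Fin r → Fin N :=
  Sum.elim (fun j => (p.2.1 j).1) fun j => (p.2.2 j).1

/-- The y-entries of the `ℓ` L-slots followed by those of the `r` R-slots. -/
def yEntries (p : RegIdx N ℓ r) : Fin ℓ ⊕ Fin r → Fin N :=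
  Sum.elim (fun j => (p.2.1 j).2) fun j => (p.2.2 j).2

/-- The basis indices spanning the range of the distinctness projector. -/
abbrev IsXYDist (p : RegIdx N ℓ r) : Prop :=
  Function.Injective (xEntries p) ∧ Function.Injective (yEntries p)

/-- The index `p` with both the query entry and the x-entry of the `i`-th R-slot replaced by `u`.
For `u` ranging over `Fin N`, these are the basis vectors of one copy of `EPR`. -/
def overwrite (i : Fin r) (u : Fin N) (p : RegIdx N ℓ r) : RegIdx N ℓ r :=
  (u, p.2.1, Function.update p.2.2 i (u, (p.2.2 i).2))

theorem xEntries_overwrite (i : Fin r) (u : Fin N) (p : RegIdx N ℓ r) :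
    xEntries (overwrite i u p) = Function.update (xEntries p) (Sum.inr i) u := by
  funext s
  rcases s with j | j
  · simp [xEntries, overwrite]
  · by_cases hj : j = i <;> simp [xEntries, overwrite, Function.update_apply, hj]

theorem yEntries_overwrite (i : Fin r) (u : Fin N) (p : RegIdx N ℓ r) :
    yEntries (overwrite i u p) = yEntries p := by
  funext s
  rcases s with j | j
  · rfl
  · by_cases hj : j = i <;> simp [yEntries, overwrite, Function.update_apply, hj]

theorem card_not_isXYDist_overwrite_le {p : RegIdx N ℓ r} (hp : IsXYDist p) (i : Fin r) :
    #{u | ¬ IsXYDist (overwrite i u p)} ≤ ℓ + r := by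
  simpa [IsXYDist, xEntries_overwrite, yEntries_overwrite, hp.2] using
    card_not_injective_update_le hp.1 (Sum.inr i)

end RegIdx

open RegIdx

theorem xyDistProj_eq_diagonal :
    xyDistProj N ℓ r = Matrix.diagonal fun p => if IsXYDist p then 1 else 0 := rfl

theorem eqProjR_eq_diagonal (i : Fin r) :
    eqProjR N ℓ r i = Matrix.diagonal fun p => if (p.2.2 i).1 = p.1 then 1 else 0 := by
  ext p q
  rw [Matrix.diagonal_apply, eqProjR, Matrix.of_apply]
  by_cases hpq : p = q
  · subst hpq
    simp
  · rw [if_neg hpq, if_neg]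
    rintro ⟨hA, hp, hq, hy, hR, hL⟩
    refine hpq (Prod.ext hA (Prod.ext hL (funext fun j => ?_)))
    by_cases hj : j = i
    · exact hj ▸ Prod.ext (hp.trans hq.symm) hy
    · exact hR j hj

theorem commute_xyDistProj_eqProjR (i : Fin r) :
    Commute (xyDistProj N ℓ r) (eqProjR N ℓ r i) := by
  rw [xyDistProj_eq_diagonal, eqProjR_eq_diagonal]
  exact Matrix.commute_diagonal _ _

theorem isHermitian_eprProjR (i : Fin r) : (eprProjR N ℓ r i).IsHermitian := by
  ext p q
  simp only [eprProjR, Matrix.conjTranspose_apply, Matrix.of_apply]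
  rw [apply_ite star, star_inv₀, star_natCast, star_zero]
  congr 1
  grind

theorem norm_eprProjR_apply_le (i : Fin r) (p q : RegIdx N ℓ r) :
    ‖eprProjR N ℓ r i p q‖ ≤ ∑ u, if overwrite i u p = q then (N : ℝ)⁻¹ else 0 := by
  rw [eprProjR, Matrix.of_apply]
  split_ifs with h
  · obtain ⟨-, hq, hy, hR, hL⟩ := h
    have hpq : overwrite i q.1 p = q := by
      refine Prod.ext rfl (Prod.ext hL (funext fun j => ?_))
      by_cases hj : j = i
      · subst hj
        simpa [overwrite, Prod.ext_iff] using ⟨hq.symm, hy⟩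
      · simpa [overwrite, hj] using hR j hj
    calc ‖(N : ℂ)⁻¹‖ = if overwrite i q.1 p = q then (N : ℝ)⁻¹ else 0 := by simp [hpq]
      _ ≤ _ := single_le_sum (f := fun u => if overwrite i u p = q then (N : ℝ)⁻¹ else 0)
        (fun _ _ => by positivity) (mem_univ q.1)
  · rw [norm_zero]
    positivity

theorem sum_norm_eprProjR_le (i : Fin r) (p : RegIdx N ℓ r) (P : RegIdx N ℓ r → Prop)
    [DecidablePred P] :
    ∑ q with P q, ‖eprProjR N ℓ r i p q‖ ≤ #{u | P (overwrite i u p)} / (N : ℝ) := by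
  calc ∑ q with P q, ‖eprProjR N ℓ r i p q‖
      ≤ ∑ q with P q, ∑ u, if overwrite i u p = q then (N : ℝ)⁻¹ else 0 :=
        sum_le_sum fun q _ => norm_eprProjR_apply_le i p q
    _ = ∑ u, if P (overwrite i u p) then (N : ℝ)⁻¹ else 0 := by
        rw [sum_comm]
        simp
    _ = #{u | P (overwrite i u p)} / (N : ℝ) := by
        rw [← sum_filter, sum_const, nsmul_eq_mul, div_eq_mul_inv]

open scoped Matrix.Norms.L2Operator in
theorem opNorm_commutator_eprProjR_le (i : Fin r) :
    opNorm (eprProjR N ℓ r i * xyDistProj N ℓ r - xyDistProj N ℓ r * eprProjR N ℓ r i) ≤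
      √((ℓ + r : ℝ) / N) := by
  have hdist (p : RegIdx N ℓ r) (hp : IsXYDist p) :
      ∑ q with ¬ IsXYDist q, ‖eprProjR N ℓ r i p q‖ ≤ (ℓ + r : ℝ) / N := by
    refine (sum_norm_eprProjR_le i p _).trans ?_
    gcongr
    exact_mod_cast card_not_isXYDist_overwrite_le hp i
  have hrow (p : RegIdx N ℓ r) : ∑ q with IsXYDist q, ‖eprProjR N ℓ r i p q‖ ≤ 1 :=
    (sum_norm_eprProjR_le i p _).trans <| div_le_one_of_le₀
      (by exact_mod_cast card_finset_fin_le _) (Nat.cast_nonneg N)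
  rw [opNorm_eq_l2_opNorm, norm_sub_rev, ← mul_one ((ℓ + r : ℝ) / N), xyDistProj_eq_diagonal]
  exact l2_opNorm_commutator_diagonal_ite_le _ (isHermitian_eprProjR i) (by positivity)
    zero_le_one hdist fun p _ => hrow p

end EprCommutator

/-- **Approximate commutation of the EPR projector with the distinctness projector.**
For `ℓ + r ≤ N`, `r ≥ 1` and `i ∈ [r]`,
`‖Π^xydist (Π^eq_i − Π^EPR_i) − (Π^eq_i − Π^EPR_i) Π^xydist‖ ≤ √((ℓ+r)/N)`. -/
theorem epr_dist_approx_commute (N ℓ r : ℕ) (hN : 1 ≤ N) (hr : 1 ≤ r)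
    (hlen : ℓ + r ≤ N) (i : Fin r) :
    opNorm (xyDistProj N ℓ r * (eqProjR N ℓ r i - eprProjR N ℓ r i) -
        (eqProjR N ℓ r i - eprProjR N ℓ r i) * xyDistProj N ℓ r) ≤
      Real.sqrt ((ℓ + r : ℝ) / N) := by
  have hcomm : xyDistProj N ℓ r * (eqProjR N ℓ r i - eprProjR N ℓ r i) -
      (eqProjR N ℓ r i - eprProjR N ℓ r i) * xyDistProj N ℓ r =
        eprProjR N ℓ r i * xyDistProj N ℓ r - xyDistProj N ℓ r * eprProjR N ℓ r i := by
    rw [mul_sub, sub_mul, (commute_xyDistProj_eqProjR i).eq]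
    abel
  rw [hcomm]
  exact opNorm_commutator_eprProjR_le i
end

section
/- Two-design twirling bound. Let N ≥ 1 and let ℓ, r ≥ 0 be integers. On the space H := ℂ^N ⊗ (ℂ^N⊗ℂ^N)^{⊗ℓ} ⊗ (ℂ^N⊗ℂ^N)^{⊗r} (registers: the query register A, then ℓ 'L-slots' and r 'R-slots', each slot consisting of an x-factor and a y-factor), for i ∈ [ℓ] let Π^eq_{L,i} := Σ_{u∈[N]} |e_u⟩⟨e_u|_A ⊗ |e_u⟩⟨e_u| on the x-factor of the i-th L-slot (identity elsewhere); for i ∈ [r] let Π^eq_{R,i} be the analogous equality projector between A and the x-factor of the i-th R-slot, and let Π^EPR_{R,i} := |EPR⟩⟨EPR| between A and the x-factor of the i-th R-slot (identity elsewhere), where EPR := (1/√N) Σ_{u∈[N]} e_u⊗e_u. For unitaries C, D ∈ U(N), let T[C,D] := C_A ⊗ (C⊗D^T)^{⊗ℓ} ⊗ (C̄⊗D^†)^{⊗r}, where C̄ is the entrywise conjugate, D^T the transpose, and D^† the conjugate transpose. Then ‖ ∫∫ T[C,D]^† · ( Σ_{i∈[ℓ]} Π^eq_{L,i} + Σ_{i∈[r]}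 (Π^eq_{R,i} − Π^EPR_{R,i}) ) · T[C,D] dμ(C) dμ(D) ‖ ≤ (2ℓ + r)/(N+1), where μ is the normalized Haar probability measure on U(N) and ‖·‖ is the operator norm. -/
/-!
Conjugation by `T[C,D]` cancels `D` and every slot except the one a projector acts on, so each
summand is the ampliation of a twirl on two copies of `ℂ^N`: over `C ⊗ C` for an L-slot and over
`C ⊗ C̄` for an R-slot. The Haar average of `Σ_u |e_u e_u⟩⟨e_u e_u|` over `C ⊗ C` lives on the
symmetric square and commutes with all `V ⊗ V`. Its matrix element at `v ⊗ v` therefore depends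
only on `‖v‖`, and polarization together with the trace identifies the average as
`(1 + swap) / (N + 1)`. The partial transpose exchanges the two twirls, fixes `Π^eq` and sends
`swap` to `N • Π^EPR`, while `Π^EPR` is invariant under `C ⊗ C̄`; hence `Π^eq - Π^EPR` averages to
`(1 - Π^EPR) / (N + 1)`. Ampliations are contractive, so an L-slot contributes at most
`2 / (N + 1)` to the norm and an R-slot at most `1 / (N + 1)`.
-/

open Finset MeasureTheory
open scoped Matrix

/-- The equality projector `Π^eq_{L,i}` between the query register and the x-factor of
the `i`-th L-slot, identity elsewhere. -/
noncomputable def eqProjL (N ℓ r : ℕ) (i : Fin ℓ) :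
    Matrix (RegIdx N ℓ r) (RegIdx N ℓ r) ℂ :=
  Matrix.of fun p q =>
    if p.1 = q.1 ∧ (p.2.1 i).1 = p.1 ∧ (q.2.1 i).1 = p.1 ∧ (p.2.1 i).2 = (q.2.1 i).2 ∧
        (∀ j, j ≠ i → p.2.1 j = q.2.1 j) ∧ p.2.2 = q.2.2
    then 1 else 0

/-- The twirling operator `T[C,D] = C_A ⊗ (C⊗Dᵀ)^{⊗ℓ} ⊗ (C̄⊗D†)^{⊗r}`, written
entrywise. -/
noncomputable def twirlOp (N ℓ r : ℕ) (C D : Matrix (Fin N) (Fin N) ℂ) :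
    Matrix (RegIdx N ℓ r) (RegIdx N ℓ r) ℂ :=
  Matrix.of fun p q =>
    C p.1 q.1 *
      (∏ j, (C (p.2.1 j).1 (q.2.1 j).1 * D (q.2.1 j).2 (p.2.1 j).2)) *
      (∏ j, ((starRingEnd ℂ) (C (p.2.2 j).1 (q.2.2 j).1) *
        (starRingEnd ℂ) (D (q.2.2 j).2 (p.2.2 j).2)))

open scoped Kronecker

lemma isMulRightInvariant_of_isMulLeftInvariant {G : Type*} [Group G] [TopologicalSpace G]
    [IsTopologicalGroup G] [CompactSpace G] [MeasurableSpace G] [BorelSpace G]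
    (μ : Measure G) [IsProbabilityMeasure μ] [μ.IsMulLeftInvariant] :
    μ.IsMulRightInvariant where
  map_mul_right_eq_self g := by
    have isHaar (ν : Measure G) [IsProbabilityMeasure ν] [ν.IsMulLeftInvariant] :
        ν.IsHaarMeasure :=
      Measure.isHaarMeasure_of_isCompact_nonempty_interior ν Set.univ isCompact_univ
        (by simp) (by simp) (by simp)
    have : IsProbabilityMeasure (μ.map (· * g)) :=
      Measure.isProbabilityMeasure_map (measurable_mul_const g).aemeasurable
    have := isHaar μ
    have := isHaar (μ.map (· * g))
    exact Measure.isHaarMeasure_eq_of_isProbabilityMeasure (μ.map (· * g)) μ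

section SymmetricSquare

variable {n : Type*}

/-- The tensor product of two vectors, in coordinates. -/
def vecTensor (v w : n → ℂ) : n × n → ℂ := fun x => v x.1 * w x.2

lemma vecTensor_add_left (v v' w : n → ℂ) :
    vecTensor (v + v') w = vecTensor v w + vecTensor v' w := by
  ext; simp [vecTensor, add_mul]

lemma vecTensor_add_right (v w w' : n → ℂ) :
    vecTensor v (w + w') = vecTensor v w + vecTensor v w' := by
  ext; simp [vecTensor, mul_add]

lemma vecTensor_smul_left (c : ℂ) (v w : n → ℂ) : vecTensor (c • v) w = c • vecTensor v w := by
  ext; simp [vecTensor, mul_assoc]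

lemma vecTensor_smul_right (c : ℂ) (v w : n → ℂ) : vecTensor v (c • w) = c • vecTensor v w := by
  ext; simp [vecTensor, mul_left_comm]

/-- The operator on `ℂⁿ ⊗ ℂⁿ` exchanging the two tensor factors. -/
def swapMatrix (n : Type*) [DecidableEq n] : Matrix (n × n) (n × n) ℂ :=
  (Equiv.prodComm n n).toPEquiv.toMatrix

lemma swapMatrix_apply [DecidableEq n] (x y : n × n) :
    swapMatrix n x y = if x.2 = y.1 ∧ x.1 = y.2 then 1 else 0 := by
  simp [swapMatrix, PEquiv.toMatrix_apply, Prod.ext_iff, eq_comm]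

lemma vecTensor_single [DecidableEq n] (i j : n) :
    vecTensor (Pi.single i 1) (Pi.single j 1) = Pi.single (i, j) 1 := by
  ext x
  simp [vecTensor, Pi.single_apply, Prod.ext_iff, ← ite_and, and_comm]

variable [Fintype n]

lemma kronecker_mulVec_vecTensor (A B : Matrix n n ℂ) (v w : n → ℂ) :
    (A ⊗ₖ B) *ᵥ vecTensor v w = vecTensor (A *ᵥ v) (B *ᵥ w) := by
  ext x
  simp only [Matrix.mulVec, dotProduct, vecTensor, Fintype.sum_prod_type, Finset.sum_mul_sum,
    Matrix.kroneckerMap_apply]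
  exact Finset.sum_congr rfl fun i _ => Finset.sum_congr rfl fun j _ => by ring

/-- The matrix element `⟨x ⊗ y, K (z ⊗ w)⟩`, as a form in four vectors. -/
def tensorForm (K : Matrix (n × n) (n × n) ℂ) (x y z w : n → ℂ) : ℂ :=
  star (vecTensor x y) ⬝ᵥ K *ᵥ vecTensor z w

lemma tensorForm_mulVec (K : Matrix (n × n) (n × n) ℂ) (A B C D : Matrix n n ℂ)
    (x y z w : n → ℂ) : tensorForm K (A *ᵥ x) (B *ᵥ y) (C *ᵥ z) (D *ᵥ w) =
      tensorForm ((A ⊗ₖ B)ᴴ * K * (C ⊗ₖ D)) x y z w := by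
  simp only [tensorForm, ← kronecker_mulVec_vecTensor, Matrix.star_mulVec, Matrix.mulVec_mulVec,
    ← Matrix.dotProduct_mulVec, ← Matrix.mul_assoc]

variable [DecidableEq n]

lemma conjTranspose_mul_self_of_mem_unitaryGroup {U : Matrix n n ℂ}
    (hU : U ∈ Matrix.unitaryGroup n ℂ) : Uᴴ * U = 1 :=
  Matrix.mem_unitaryGroup_iff'.1 hU

lemma swapMatrix_mulVec_vecTensor (v w : n → ℂ) :
    swapMatrix n *ᵥ vecTensor v w = vecTensor w v := by
  ext x
  simp [swapMatrix, PEquiv.toMatrix_toPEquiv_mulVec, vecTensor, mul_comm]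

lemma vecTensor_vecMul_swapMatrix (v w : n → ℂ) :
    vecTensor v w ᵥ* swapMatrix n = vecTensor w v := by
  ext x
  simp [swapMatrix, PEquiv.vecMul_toMatrix_toPEquiv, vecTensor, mul_comm]

lemma swapMatrix_mul_kronecker (A B : Matrix n n ℂ) :
    swapMatrix n * (A ⊗ₖ B) = (B ⊗ₖ A) * swapMatrix n := by
  ext x y
  simp [swapMatrix, PEquiv.toMatrix_toPEquiv_mul, PEquiv.mul_toMatrix_toPEquiv, mul_comm]

lemma tensorForm_swap_left {K : Matrix (n × n) (n × n) ℂ} (hK : swapMatrix n * K = K)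
    (x y z w : n → ℂ) : tensorForm K x y z w = tensorForm K y x z w := by
  have hstar (v w : n → ℂ) : star (vecTensor v w) = vecTensor (star v) (star w) := by
    ext; simp [vecTensor]
  conv_lhs => rw [← hK]
  rw [tensorForm, tensorForm, ← Matrix.mulVec_mulVec, Matrix.dotProduct_mulVec, hstar, hstar,
    vecTensor_vecMul_swapMatrix]

lemma tensorForm_swap_right {K : Matrix (n × n) (n × n) ℂ} (hK : K * swapMatrix n = K)
    (x y z w : n → ℂ) : tensorForm K x y z w = tensorForm K x y w z := by
  rw [tensorForm, tensorForm, ← swapMatrix_mulVec_vecTensor w z, Matrix.mulVec_mulVec, hK]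

lemma tensorForm_polarize {K : Matrix (n × n) (n × n) ℂ}
    (hleft : swapMatrix n * K = K) (hright : K * swapMatrix n = K)
    (hK : ∀ v, tensorForm K v v v v = 0) (x y : n → ℂ) : tensorForm K x x y y = 0 := by
  have even_part (y : n → ℂ) :
      tensorForm K x x y y + tensorForm K y y x x + 4 * tensorForm K x y x y = 0 := by
    have hadd := hK (x + y)
    have hsub := hK (x + (-1 : ℂ) • y)
    have hx := hK x
    have hy := hK y
    have hxyxy := tensorForm_swap_right hright x y x y
    have hyxxy := tensorForm_swap_left hleft y x x y
    have hyxyx := tensorForm_swap_left hleft y x y x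
    simp only [tensorForm, vecTensor_add_left, vecTensor_add_right, vecTensor_smul_left,
      vecTensor_smul_right, star_add, star_smul, Matrix.mulVec_add, Matrix.mulVec_smul,
      add_dotProduct, smul_dotProduct, dotProduct_add, dotProduct_smul, smul_eq_mul, star_neg,
      star_one] at *
    linear_combination (hadd + hsub) / 2 - hx - hy + 2 * hxyxy - hyxxy - hyxyx
  -- Replacing `y` by `ω • y` multiplies the three summands by `ω²`, `ω̄²` and `ωω̄`, and the values
  -- `1`, `I` and `1 + I` of `ω` suffice to separate them.
  have rotated (ω : ℂ) : ω ^ 2 * tensorForm K x x y y + star ω ^ 2 * tensorForm K y y x x +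
      4 * (ω * star ω) * tensorForm K x y x y = 0 := by
    have h := even_part (ω • y)
    simp only [tensorForm, vecTensor_smul_left, vecTensor_smul_right, star_smul,
      Matrix.mulVec_smul, smul_dotProduct, dotProduct_smul, smul_eq_mul] at h ⊢
    linear_combination h
  have rotated_one := rotated 1
  have rotated_I := rotated Complex.I
  have rotated_sum := rotated (1 + Complex.I)
  simp only [star_one, star_add, Complex.star_def, Complex.conj_I]
    at rotated_one rotated_I rotated_sum
  linear_combination (-Complex.I ^ 2 * rotated_one - rotated_I) / 4 -
    Complex.I / 4 * (rotated_sum - rotated_one - rotated_I) +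
    tensorForm K x x y y * Complex.I_sq

lemma eq_zero_of_tensorForm_self {K : Matrix (n × n) (n × n) ℂ}
    (hleft : swapMatrix n * K = K) (hright : K * swapMatrix n = K)
    (hK : ∀ v, tensorForm K v v v v = 0) : K = 0 := by
  have left_polar (x x' y : n → ℂ) : tensorForm K x x' y y = 0 := by
    have hsum := tensorForm_polarize hleft hright hK (x + x') y
    have hx := tensorForm_polarize hleft hright hK x y
    have hx' := tensorForm_polarize hleft hright hK x' y
    have hswap := tensorForm_swap_left hleft x x' y y
    simp only [tensorForm, vecTensor_add_left, vecTensor_add_right, star_add,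
      add_dotProduct] at *
    linear_combination (hsum - hx - hx' + hswap) / 2
  have polar (x x' y y' : n → ℂ) : tensorForm K x x' y y' = 0 := by
    have hsum := left_polar x x' (y + y')
    have hy := left_polar x x' y
    have hy' := left_polar x x' y'
    have hswap := tensorForm_swap_right hright x x' y y'
    simp only [tensorForm, vecTensor_add_left, vecTensor_add_right, Matrix.mulVec_add,
      dotProduct_add] at *
    linear_combination (hsum - hy - hy' + hswap) / 2
  ext p q
  have h := polar (Pi.single p.1 1) (Pi.single p.2 1) (Pi.single q.1 1) (Pi.single q.2 1)
  simpa [tensorForm, vecTensor_single, ← Pi.single_star] using h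

lemma exists_unitary_mulVec_single (v : n → ℂ) (a : n) :
    ∃ V ∈ Matrix.unitaryGroup n ℂ, ∃ c : ℂ, v = V *ᵥ (c • Pi.single a 1) := by
  obtain ⟨e, he, c, hv⟩ : ∃ e : EuclideanSpace ℂ n, ‖e‖ = 1 ∧ ∃ c : ℂ, v = c • (e : n → ℂ) := by
    rcases eq_or_ne (WithLp.toLp 2 v) 0 with h0 | h0
    · exact ⟨EuclideanSpace.single a 1, by simp, 0, by simpa using h0⟩
    · refine ⟨(‖WithLp.toLp 2 v‖ : ℂ)⁻¹ • WithLp.toLp 2 v, ?_, ‖WithLp.toLp 2 v‖, ?_⟩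
      · simp [norm_smul, h0]
      · simp [h0]
  obtain ⟨b, hb⟩ := Orthonormal.exists_orthonormalBasis_extension_of_card_eq (𝕜 := ℂ)
    (v := fun _ : n => e) (s := {a}) (card_ι := by simp)
    ⟨fun _ => he, fun i j hij => absurd (Subsingleton.elim i j) hij⟩
  refine ⟨(EuclideanSpace.basisFun n ℂ).toBasis.toMatrix b,
    OrthonormalBasis.toMatrix_orthonormalBasis_mem_unitary _ _, c, ?_⟩
  ext i
  simp [hv, Module.Basis.toMatrix_apply, Matrix.mulVec_smul, hb a rfl]

lemma swapMatrix_invariant {V : Matrix n n ℂ} (hV : V ∈ Matrix.unitaryGroup n ℂ) :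
    (V ⊗ₖ V)ᴴ * swapMatrix n * (V ⊗ₖ V) = swapMatrix n := by
  rw [mul_assoc, swapMatrix_mul_kronecker, ← mul_assoc,
    conjTranspose_mul_self_of_mem_unitaryGroup (Matrix.kronecker_mem_unitary hV hV), one_mul]

lemma swapMatrix_mul_self : swapMatrix n * swapMatrix n = 1 := by
  ext x y
  simp [swapMatrix, PEquiv.toMatrix_toPEquiv_mul, PEquiv.toMatrix_apply, Matrix.one_apply,
    Prod.ext_iff]

lemma exists_eq_smul_one_add_swapMatrix {K : Matrix (n × n) (n × n) ℂ}
    (hleft : swapMatrix n * K = K) (hright : K * swapMatrix n = K)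
    (hK : ∀ V ∈ Matrix.unitaryGroup n ℂ, (V ⊗ₖ V)ᴴ * K * (V ⊗ₖ V) = K) :
    ∃ c : ℂ, K = c • (1 + swapMatrix n) := by
  rcases isEmpty_or_nonempty n with _ | ⟨⟨a⟩⟩
  · exact ⟨0, Subsingleton.elim _ _⟩
  refine ⟨K (a, a) (a, a) / 2, sub_eq_zero.1 (eq_zero_of_tensorForm_self ?_ ?_ fun v => ?_)⟩
  · rw [mul_sub, hleft, mul_smul_comm, mul_add, mul_one, swapMatrix_mul_self, add_comm]
  · rw [sub_mul, hright, smul_mul_assoc, add_mul, one_mul, swapMatrix_mul_self, add_comm]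
  · obtain ⟨V, hV, c, rfl⟩ := exists_unitary_mulVec_single v a
    rw [tensorForm_mulVec, mul_sub, sub_mul, hK V hV, mul_smul_comm, smul_mul_assoc,
      mul_add, add_mul, mul_one,
      conjTranspose_mul_self_of_mem_unitaryGroup (Matrix.kronecker_mem_unitary hV hV),
      swapMatrix_invariant hV]
    simp [tensorForm, vecTensor_smul_left, vecTensor_smul_right, vecTensor_single,
      Matrix.mulVec_smul, swapMatrix_apply]

lemma trace_one_add_swapMatrix :
    (1 + swapMatrix n).trace = (Fintype.card n : ℂ) * (Fintype.card n + 1) := by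
  have hswap : (swapMatrix n).trace = Fintype.card n := by
    rw [Matrix.trace, Fintype.sum_prod_type]
    simp [swapMatrix_apply, and_iff_left_of_imp Eq.symm]
  rw [Matrix.trace_add, hswap, Matrix.trace_one, Fintype.card_prod]
  push_cast
  ring

end SymmetricSquare

section HaarTwirl

variable {n : Type*} [Fintype n] [DecidableEq n]

instance matrixBorelSpace {m n : Type*} [Finite m] [Finite n] : BorelSpace (Matrix m n ℂ) :=
  inferInstanceAs (BorelSpace (m → n → ℂ))

open scoped Matrix.Norms.L2Operator

instance unitaryGroup_compactSpace : CompactSpace (Matrix.unitaryGroup n ℂ) :=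
  isCompact_iff_compactSpace.1 <| Metric.isCompact_of_isClosed_isBounded isClosed_unitary <|
    isBounded_iff_forall_norm_le.2 ⟨1, fun U hU => by
      cases isEmpty_or_nonempty n
      · simp [Subsingleton.elim U 0]
      · exact (CStarRing.norm_of_mem_unitary hU).le⟩

@[fun_prop]
lemma continuous_kronecker {X m k : Type*} [TopologicalSpace X] {A : X → Matrix m m ℂ}
    {B : X → Matrix k k ℂ} (hA : Continuous A) (hB : Continuous B) :
    Continuous fun x => A x ⊗ₖ B x := by
  refine continuous_matrix fun i j => ?_
  simp only [Matrix.kroneckerMap_apply]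
  fun_prop

lemma integrable_conj {m : Type*} [Fintype m] [DecidableEq m]
    (μ : Measure (Matrix.unitaryGroup n ℂ)) [IsFiniteMeasure μ]
    {X : Matrix.unitaryGroup n ℂ → Matrix m m ℂ} (hX : Continuous X) (P : Matrix m m ℂ) :
    Integrable (fun C => (X C)ᴴ * P * X C) μ :=
  Continuous.integrable_of_hasCompactSupport (by fun_prop) (HasCompactSupport.of_compactSpace _)

lemma integral_linearMap {Ω E F : Type*} [MeasurableSpace Ω] {μ : Measure Ω}
    [NormedAddCommGroup E] [NormedSpace ℂ E] [FiniteDimensional ℂ E]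
    [NormedAddCommGroup F] [NormedSpace ℂ F] [CompleteSpace F] {φ : Ω → E}
    (L : E →ₗ[ℂ] F) (hφ : Integrable φ μ) : ∫ ω, L (φ ω) ∂μ = L (∫ ω, φ ω ∂μ) := by
  have : CompleteSpace E := FiniteDimensional.complete ℂ E
  exact (LinearMap.toContinuousLinearMap L).integral_comp_comm hφ

lemma trace_kronecker_conj {C : Matrix n n ℂ} (hC : C ∈ Matrix.unitaryGroup n ℂ)
    (P : Matrix (n × n) (n × n) ℂ) : ((C ⊗ₖ C)ᴴ * P * (C ⊗ₖ C)).trace = P.trace := by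
  have hCC : (C ⊗ₖ C) * (C ⊗ₖ C)ᴴ = 1 :=
    Matrix.mem_unitaryGroup_iff.1 (Matrix.kronecker_mem_unitary hC hC)
  rw [Matrix.trace_mul_cycle, hCC, one_mul]

lemma swapMatrix_mul_kronecker_conj (C : Matrix n n ℂ) {P : Matrix (n × n) (n × n) ℂ}
    (hP : swapMatrix n * P = P) :
    swapMatrix n * ((C ⊗ₖ C)ᴴ * P * (C ⊗ₖ C)) = (C ⊗ₖ C)ᴴ * P * (C ⊗ₖ C) := by
  rw [Matrix.conjTranspose_kronecker, ← mul_assoc, ← mul_assoc, swapMatrix_mul_kronecker,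
    mul_assoc _ (swapMatrix n) P, hP]

lemma kronecker_conj_mul_swapMatrix (C : Matrix n n ℂ) {P : Matrix (n × n) (n × n) ℂ}
    (hP : P * swapMatrix n = P) :
    (C ⊗ₖ C)ᴴ * P * (C ⊗ₖ C) * swapMatrix n = (C ⊗ₖ C)ᴴ * P * (C ⊗ₖ C) := by
  rw [mul_assoc, ← swapMatrix_mul_kronecker, ← mul_assoc, mul_assoc _ P, hP]

lemma integral_kronecker_conj (μ : Measure (Matrix.unitaryGroup n ℂ)) [IsProbabilityMeasure μ]
    [μ.IsMulLeftInvariant] {P : Matrix (n × n) (n × n) ℂ}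
    (hleft : swapMatrix n * P = P) (hright : P * swapMatrix n = P) :
    ∫ C, (C.1 ⊗ₖ C.1)ᴴ * P * (C.1 ⊗ₖ C.1) ∂μ =
      (P.trace / (Fintype.card n * (Fintype.card n + 1))) • (1 + swapMatrix n) := by
  have := isMulRightInvariant_of_isMulLeftInvariant μ
  have hint := integrable_conj (X := fun C => C.1 ⊗ₖ C.1) μ (by fun_prop) P
  obtain ⟨c, hc⟩ := exists_eq_smul_one_add_swapMatrix
    (K := ∫ C, (C.1 ⊗ₖ C.1)ᴴ * P * (C.1 ⊗ₖ C.1) ∂μ)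
    (by simp [← integral_const_mul_of_integrable hint, swapMatrix_mul_kronecker_conj _ hleft])
    (by simp [← integral_mul_const_of_integrable hint, kronecker_conj_mul_swapMatrix _ hright])
    fun V hV => by
      rw [← integral_const_mul_of_integrable hint,
        ← integral_mul_const_of_integrable (hint.const_mul _)]
      conv_rhs => rw [← integral_mul_right_eq_self _ (⟨V, hV⟩ : Matrix.unitaryGroup n ℂ)]
      simp [Matrix.mul_kronecker_mul, mul_assoc]
  have htrace : P.trace = c * (Fintype.card n * (Fintype.card n + 1)) :=
    calc P.trace = ∫ C, ((C.1 ⊗ₖ C.1)ᴴ * P * (C.1 ⊗ₖ C.1)).trace ∂μ := by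
          simp [trace_kronecker_conj (Subtype.prop _)]
      _ = (c • (1 + swapMatrix n)).trace := by
          rw [← hc]; exact integral_linearMap (Matrix.traceLinearMap _ ℂ ℂ) hint
      _ = _ := by rw [Matrix.trace_smul, trace_one_add_swapMatrix, smul_eq_mul]
  rcases isEmpty_or_nonempty n with _ | _
  · exact Subsingleton.elim _ _
  have hcard : (Fintype.card n : ℂ) * (Fintype.card n + 1) ≠ 0 :=
    mul_ne_zero (by simp) (Nat.cast_add_one_ne_zero _)
  rw [hc, htrace, mul_div_cancel_right₀ _ hcard]

/-- The projection onto the span of the vectors `e_u ⊗ e_u`. -/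
def pairEq (n : Type*) [DecidableEq n] : Matrix (n × n) (n × n) ℂ :=
  Matrix.diagonal fun x => if x.1 = x.2 then 1 else 0

/-- The law of a random unitary whose rows, averaged uniformly, form a complex projective
2-design. In matrix form, twirling `pairEq` over `C ⊗ C` gives a multiple of the projection
`(1 + swapMatrix n) / 2` onto the symmetric square. Every unitary 2-design has this property. -/
def IsRowTwoDesign (μ : Measure (Matrix.unitaryGroup n ℂ)) : Prop :=
  ∫ C, (C.1 ⊗ₖ C.1)ᴴ * pairEq n * (C.1 ⊗ₖ C.1) ∂μ =
    ((Fintype.card n : ℂ) + 1)⁻¹ • (1 + swapMatrix n)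

lemma isRowTwoDesign_of_isMulLeftInvariant (μ : Measure (Matrix.unitaryGroup n ℂ))
    [IsProbabilityMeasure μ] [μ.IsMulLeftInvariant] : IsRowTwoDesign μ := by
  have hleft : swapMatrix n * pairEq n = pairEq n := by
    ext x y
    simp only [pairEq, swapMatrix_apply, Matrix.mul_diagonal, Matrix.diagonal_apply, Prod.ext_iff]
    grind
  have hright : pairEq n * swapMatrix n = pairEq n := by
    ext x y
    simp only [pairEq, swapMatrix_apply, Matrix.diagonal_mul, Matrix.diagonal_apply, Prod.ext_iff]
    grind
  have htrace : (pairEq n).trace = Fintype.card n := by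
    rw [pairEq, Matrix.trace_diagonal, Fintype.sum_prod_type]
    simp
  rcases isEmpty_or_nonempty n with _ | _
  · exact Subsingleton.elim _ _
  rw [IsRowTwoDesign, integral_kronecker_conj μ hleft hright, htrace,
    div_mul_cancel_left₀ (by simp)]

end HaarTwirl

section PartialTranspose

variable {n : Type*}

/-- Transposition of the second tensor factor of an operator on `ℂⁿ ⊗ ℂⁿ`. -/
def partialTranspose : Matrix (n × n) (n × n) ℂ →ₗ[ℂ] Matrix (n × n) (n × n) ℂ where
  toFun M := Matrix.of fun x y => M (x.1, y.2) (y.1, x.2)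
  map_add' _ _ := rfl
  map_smul' _ _ := rfl

@[simp]
lemma partialTranspose_apply (M : Matrix (n × n) (n × n) ℂ) (x y : n × n) :
    partialTranspose M x y = M (x.1, y.2) (y.1, x.2) := rfl

lemma partialTranspose_one [DecidableEq n] :
    partialTranspose (1 : Matrix (n × n) (n × n) ℂ) = 1 := by
  ext x y
  simp [Matrix.one_apply, Prod.ext_iff, eq_comm]

lemma partialTranspose_pairEq [DecidableEq n] : partialTranspose (pairEq n) = pairEq n := by
  ext x y
  simp only [partialTranspose_apply, pairEq, Matrix.diagonal_apply, Prod.ext_iff]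
  grind

variable [Fintype n]

lemma kronecker_mul_partialTranspose_mul_kronecker (A B C D : Matrix n n ℂ)
    (M : Matrix (n × n) (n × n) ℂ) :
    (A ⊗ₖ Dᵀ) * partialTranspose M * (C ⊗ₖ Bᵀ) =
      partialTranspose ((A ⊗ₖ B) * M * (C ⊗ₖ D)) := by
  ext x y
  simp only [Matrix.mul_apply, partialTranspose_apply, Fintype.sum_prod_type, Finset.sum_mul,
    Matrix.kroneckerMap_apply, Matrix.transpose_apply]
  refine Finset.sum_congr rfl fun k _ => ?_
  rw [Finset.sum_comm]
  conv_rhs => rw [Finset.sum_comm]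
  refine Finset.sum_congr rfl fun i _ => ?_
  rw [Finset.sum_comm]
  exact Finset.sum_congr rfl fun j _ => Finset.sum_congr rfl fun l _ => by ring

lemma partialTranspose_kronecker_conj (C : Matrix n n ℂ) (M : Matrix (n × n) (n × n) ℂ) :
    (C ⊗ₖ C.map star)ᴴ * partialTranspose M * (C ⊗ₖ C.map star) =
      partialTranspose ((C ⊗ₖ C)ᴴ * M * (C ⊗ₖ C)) := by
  rw [Matrix.conjTranspose_kronecker, Matrix.conjTranspose_kronecker,
    ← kronecker_mul_partialTranspose_mul_kronecker]
  congr
  ext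
  simp

variable [DecidableEq n]

/-- The projection onto the maximally entangled vector `EPR = (1/√N) Σ_u e_u ⊗ e_u`. -/
noncomputable def pairEPR (n : Type*) [Fintype n] [DecidableEq n] : Matrix (n × n) (n × n) ℂ :=
  Matrix.of fun x y => if x.1 = x.2 ∧ y.1 = y.2 then (Fintype.card n : ℂ)⁻¹ else 0

lemma partialTranspose_swapMatrix :
    partialTranspose (swapMatrix n) = (Fintype.card n : ℂ) • pairEPR n := by
  ext x y
  have : Nonempty n := ⟨x.1⟩
  simp [swapMatrix_apply, pairEPR, eq_comm, and_comm]

lemma isStarProjection_pairEPR : IsStarProjection (pairEPR n) where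
  isIdempotentElem := by
    ext x y
    have : Nonempty n := ⟨x.1⟩
    have hcard : (Fintype.card n : ℂ) ≠ 0 := Nat.cast_ne_zero.2 Fintype.card_ne_zero
    simp only [pairEPR, Matrix.mul_apply, Matrix.of_apply, Fintype.sum_prod_type, ite_and,
      ite_mul, mul_ite, zero_mul, mul_zero, Finset.sum_ite_irrel, Finset.sum_ite_eq,
      Finset.sum_const, Finset.mem_univ, if_true, Finset.card_univ,
      nsmul_eq_mul, mul_inv_cancel_left₀ hcard]
    split_ifs <;> rfl
  isSelfAdjoint := by
    ext x y
    simp [pairEPR, Matrix.star_apply, apply_ite star, and_comm]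

lemma pairEPR_invariant {C : Matrix n n ℂ} (hC : C ∈ Matrix.unitaryGroup n ℂ) :
    (C ⊗ₖ C.map star)ᴴ * pairEPR n * (C ⊗ₖ C.map star) = pairEPR n := by
  rcases isEmpty_or_nonempty n with _ | _
  · exact Subsingleton.elim _ _
  have hEPR : pairEPR n = (Fintype.card n : ℂ)⁻¹ • partialTranspose (swapMatrix n) := by
    simp [partialTranspose_swapMatrix]
  rw [hEPR, mul_smul_comm, smul_mul_assoc, partialTranspose_kronecker_conj,
    swapMatrix_invariant hC]

open scoped Matrix.Norms.L2Operator

lemma IsRowTwoDesign.integral_partialTranspose {μ : Measure (Matrix.unitaryGroup n ℂ)}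
    [IsProbabilityMeasure μ] (hμ : IsRowTwoDesign μ) :
    ∫ C, (C.1 ⊗ₖ C.1.map star)ᴴ * (pairEq n - pairEPR n) * (C.1 ⊗ₖ C.1.map star) ∂μ =
      ((Fintype.card n : ℂ) + 1)⁻¹ • (1 - pairEPR n) := by
  have hC (C : Matrix.unitaryGroup n ℂ) :
      (C.1 ⊗ₖ C.1.map star)ᴴ * (pairEq n - pairEPR n) * (C.1 ⊗ₖ C.1.map star) =
        partialTranspose ((C.1 ⊗ₖ C.1)ᴴ * pairEq n * (C.1 ⊗ₖ C.1)) - pairEPR n := by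
    rw [mul_sub, sub_mul, pairEPR_invariant C.2, ← partialTranspose_kronecker_conj,
      partialTranspose_pairEq]
  have hint := integrable_conj (X := fun C => C.1 ⊗ₖ C.1) μ (by fun_prop) (pairEq n)
  have hintPT : Integrable (fun C : Matrix.unitaryGroup n ℂ => partialTranspose (n := n)
      ((C.1 ⊗ₖ C.1)ᴴ * pairEq n * (C.1 ⊗ₖ C.1))) μ :=
    (partialTranspose (n := n)).toContinuousLinearMap.integrable_comp hint
  simp_rw [hC]
  rw [integral_sub hintPT (integrable_const _), integral_linearMap _ hint, hμ, map_smul, map_add,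
    partialTranspose_one, partialTranspose_swapMatrix, integral_const, probReal_univ, one_smul]
  have hcard : (Fintype.card n : ℂ) + 1 ≠ 0 := Nat.cast_add_one_ne_zero _
  match_scalars <;> field_simp
  ring

end PartialTranspose

section Slots

variable {m ι ρ : Type*}

/-- The tensor power `A^{⊗J}` of a matrix `A`, acting on the space with basis `J → m`. -/
def tensorPower (J : Type*) [Fintype J] (A : Matrix m m ℂ) : Matrix (J → m) (J → m) ℂ :=
  Matrix.of fun p q => ∏ j, A (p j) (q j)

variable [Fintype m] [DecidableEq m]

lemma tensorPower_mem_unitaryGroup {J : Type*} [Fintype J] [DecidableEq J] {A : Matrix m m ℂ}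
    (hA : A ∈ Matrix.unitaryGroup m ℂ) :
    tensorPower J A ∈ Matrix.unitaryGroup (J → m) ℂ := by
  rw [Matrix.mem_unitaryGroup_iff', Matrix.star_eq_conjTranspose]
  ext p q
  calc ((tensorPower J A)ᴴ * tensorPower J A) p q
    _ = ∏ j, (Aᴴ * A) (p j) (q j) := by
      simp only [tensorPower, Matrix.mul_apply, Matrix.conjTranspose_apply, Matrix.of_apply,
        star_prod, ← Finset.prod_mul_distrib, Finset.prod_univ_sum, Fintype.piFinset_univ]
    _ = (1 : Matrix (J → m) (J → m) ℂ) p q := by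
      simp only [conjTranspose_mul_self_of_mem_unitaryGroup hA, Matrix.one_apply,
        Finset.prod_ite_zero, Finset.prod_const_one, funext_iff, Finset.mem_univ, true_implies]

variable [Fintype ι] [DecidableEq ι] [Fintype ρ] [DecidableEq ρ]

/-- The ampliation `P ↦ P ⊗ 1` of an operator on one tensor factor; the equivalence `e` records
how the basis of the whole space splits into those of the two factors. -/
def ampliation (e : ι ≃ m × ρ) : Matrix m m ℂ →⋆ₐ[ℂ] Matrix ι ι ℂ where
  toFun P := (P ⊗ₖ 1).submatrix e e
  map_one' := by simp
  map_mul' P Q := by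
    rw [Matrix.submatrix_mul_equiv, ← Matrix.mul_kronecker_mul, one_mul]
  map_zero' := by simp
  map_add' P Q := by simp [Matrix.add_kronecker, Matrix.submatrix_add]
  commutes' c := by
    simp [Algebra.algebraMap_eq_smul_one, Matrix.smul_kronecker, Matrix.submatrix_smul]
  map_star' P := by
    simp [Matrix.star_eq_conjTranspose, Matrix.conjTranspose_kronecker]

lemma ampliation_apply (e : ι ≃ m × ρ) (P : Matrix m m ℂ) (p q : ι) :
    ampliation e P p q = if (e p).2 = (e q).2 then P (e p).1 (e q).1 else 0 := by
  simp [ampliation, Matrix.one_apply]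

lemma kronecker_conj_ampliation (e : ι ≃ m × ρ) (X P : Matrix m m ℂ) {U : Matrix ρ ρ ℂ}
    (hU : U ∈ Matrix.unitaryGroup ρ ℂ) :
    ((X ⊗ₖ U).submatrix e e)ᴴ * ampliation e P * (X ⊗ₖ U).submatrix e e =
      ampliation e (Xᴴ * P * X) := by
  change ((X ⊗ₖ U).submatrix e e)ᴴ * (P ⊗ₖ 1).submatrix e e * (X ⊗ₖ U).submatrix e e =
    ((Xᴴ * P * X) ⊗ₖ 1).submatrix e e
  rw [Matrix.conjTranspose_submatrix, Matrix.submatrix_mul_equiv, Matrix.submatrix_mul_equiv,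
    Matrix.conjTranspose_kronecker, ← Matrix.mul_kronecker_mul, ← Matrix.mul_kronecker_mul,
    mul_one, conjTranspose_mul_self_of_mem_unitaryGroup hU]

end Slots

section SlotEquiv

variable {m n k J ρ : Type*} [DecidableEq J]

/-- Pairs the query register with the first factor of the `i`-th slot, and collects the second
factor of that slot, the other slots, and the register `ρ` in the complement. -/
def slotEquiv (i : J) :
    n × (J → m × k) × ρ ≃ (n × m) × k × ({j // j ≠ i} → m × k) × ρ where
  toFun p := ((p.1, (p.2.1 i).1), (p.2.1 i).2, (fun j : {j // j ≠ i} => p.2.1 j), p.2.2)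
  invFun s := (s.1.1, (Equiv.funSplitAt i _).symm ((s.1.2, s.2.1), s.2.2.1), s.2.2.2)
  left_inv p := congrArg (fun f => (p.1, f, p.2.2)) <|
    (Equiv.funSplitAt i (m × k)).symm_apply_apply p.2.1
  right_inv s := congrArg (fun t : (m × k) × ({j // j ≠ i} → m × k) =>
      ((s.1.1, t.1.1), t.1.2, t.2, s.2.2.2)) <|
    (Equiv.funSplitAt i (m × k)).apply_symm_apply ((s.1.2, s.2.1), s.2.2.1)

@[simp]
lemma slotEquiv_apply (i : J) (p : n × (J → m × k) × ρ) : slotEquiv i p =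
    ((p.1, (p.2.1 i).1), (p.2.1 i).2, (fun j : {j // j ≠ i} => p.2.1 j), p.2.2) := rfl

lemma kronecker_tensorPower_eq_submatrix [Fintype J] (i : J) (A : Matrix n n ℂ)
    (B : Matrix m m ℂ) (D : Matrix k k ℂ) (W : Matrix ρ ρ ℂ) :
    A ⊗ₖ (tensorPower J (B ⊗ₖ D) ⊗ₖ W) =
      ((A ⊗ₖ B) ⊗ₖ (D ⊗ₖ (tensorPower {j // j ≠ i} (B ⊗ₖ D) ⊗ₖ W))).submatrix
        (slotEquiv i) (slotEquiv i) := by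
  ext p q
  simp only [tensorPower, Matrix.submatrix_apply, Matrix.kroneckerMap_apply, Matrix.of_apply,
    slotEquiv_apply, Fintype.prod_eq_mul_prod_subtype_ne _ i]
  ring

lemma kronecker_tensorPower_conj_ampliation [Fintype J] [Fintype n] [DecidableEq n] [Fintype m]
    [DecidableEq m] [Fintype k] [DecidableEq k] [Fintype ρ] [DecidableEq ρ] (i : J)
    (A : Matrix n n ℂ) {B : Matrix m m ℂ} {D : Matrix k k ℂ} {W : Matrix ρ ρ ℂ}
    (hB : B ∈ Matrix.unitaryGroup m ℂ) (hD : D ∈ Matrix.unitaryGroup k ℂ)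
    (hW : W ∈ Matrix.unitaryGroup ρ ℂ) (P : Matrix (n × m) (n × m) ℂ) :
    (A ⊗ₖ (tensorPower J (B ⊗ₖ D) ⊗ₖ W))ᴴ * ampliation (slotEquiv i) P *
        (A ⊗ₖ (tensorPower J (B ⊗ₖ D) ⊗ₖ W)) =
      ampliation (slotEquiv i) ((A ⊗ₖ B)ᴴ * P * (A ⊗ₖ B)) := by
  rw [kronecker_tensorPower_eq_submatrix i, kronecker_conj_ampliation]
  exact Matrix.kronecker_mem_unitary hD <| Matrix.kronecker_mem_unitary
    (tensorPower_mem_unitaryGroup <| Matrix.kronecker_mem_unitary hB hD) hW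

end SlotEquiv

section Registers

variable {N ℓ r : ℕ}

/-- Pairs the query register with the x-factor of the `i`-th L-slot. -/
def slotL (i : Fin ℓ) : RegIdx N ℓ r ≃
    (Fin N × Fin N) × Fin N × ({j // j ≠ i} → Fin N × Fin N) × (Fin r → Fin N × Fin N) :=
  slotEquiv i

/-- Pairs the query register with the x-factor of the `i`-th R-slot. -/
def slotR (i : Fin r) : RegIdx N ℓ r ≃
    (Fin N × Fin N) × Fin N × ({j // j ≠ i} → Fin N × Fin N) × (Fin ℓ → Fin N × Fin N) :=
  ((Equiv.refl _).prodCongr (Equiv.prodComm _ _)).trans (slotEquiv i)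

lemma slotL_apply (i : Fin ℓ) (p : RegIdx N ℓ r) : slotL i p =
    ((p.1, (p.2.1 i).1), (p.2.1 i).2, (fun j : {j // j ≠ i} => p.2.1 j), p.2.2) := rfl

lemma slotR_apply (i : Fin r) (p : RegIdx N ℓ r) : slotR i p =
    ((p.1, (p.2.2 i).1), (p.2.2 i).2, (fun j : {j // j ≠ i} => p.2.2 j), p.2.1) := rfl

lemma eqProjL_eq_ampliation (i : Fin ℓ) :
    eqProjL N ℓ r i = ampliation (slotL i) (pairEq (Fin N)) := by
  ext p q
  simp only [eqProjL, ampliation_apply, slotL_apply, pairEq, Matrix.of_apply,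
    Matrix.diagonal_apply, ← ite_and, Prod.ext_iff, funext_iff, Subtype.forall]
  grind

lemma eqProjR_eq_ampliation (i : Fin r) :
    eqProjR N ℓ r i = ampliation (slotR i) (pairEq (Fin N)) := by
  ext p q
  simp only [eqProjR, ampliation_apply, slotR_apply, pairEq, Matrix.of_apply,
    Matrix.diagonal_apply, ← ite_and, Prod.ext_iff, funext_iff, Subtype.forall]
  grind

lemma eprProjR_eq_ampliation (i : Fin r) :
    eprProjR N ℓ r i = ampliation (slotR i) (pairEPR (Fin N)) := by
  ext p q
  simp only [eprProjR, ampliation_apply, slotR_apply, pairEPR, Matrix.of_apply,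
    Fintype.card_fin, ← ite_and, Prod.ext_iff, funext_iff, Subtype.forall]
  grind

lemma twirlOp_eq_kronecker (C D : Matrix (Fin N) (Fin N) ℂ) :
    twirlOp N ℓ r C D =
      C ⊗ₖ (tensorPower (Fin ℓ) (C ⊗ₖ Dᵀ) ⊗ₖ tensorPower (Fin r) (C.map star ⊗ₖ Dᴴ)) := by
  ext p q
  exact mul_assoc _ _ _

variable {C D : Matrix (Fin N) (Fin N) ℂ}

lemma twirlOp_conj_ampliation_slotL (hC : C ∈ Matrix.unitaryGroup (Fin N) ℂ)
    (hD : D ∈ Matrix.unitaryGroup (Fin N) ℂ) (i : Fin ℓ)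
    (P : Matrix (Fin N × Fin N) (Fin N × Fin N) ℂ) :
    (twirlOp N ℓ r C D)ᴴ * ampliation (slotL i) P * twirlOp N ℓ r C D =
      ampliation (slotL i) ((C ⊗ₖ C)ᴴ * P * (C ⊗ₖ C)) := by
  have hD' : Dᴴ ∈ Matrix.unitaryGroup (Fin N) ℂ := Unitary.star_mem hD
  rw [twirlOp_eq_kronecker]
  exact kronecker_tensorPower_conj_ampliation i C hC
    (Matrix.transpose_mem_unitaryGroup_iff.2 hD)
    (tensorPower_mem_unitaryGroup <| Matrix.kronecker_mem_unitary
      (Matrix.map_star_mem_unitaryGroup_iff.2 hC) hD') P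

lemma twirlOp_conj_ampliation_slotR (hC : C ∈ Matrix.unitaryGroup (Fin N) ℂ)
    (hD : D ∈ Matrix.unitaryGroup (Fin N) ℂ) (i : Fin r)
    (P : Matrix (Fin N × Fin N) (Fin N × Fin N) ℂ) :
    (twirlOp N ℓ r C D)ᴴ * ampliation (slotR i) P * twirlOp N ℓ r C D =
      ampliation (slotR i) ((C ⊗ₖ C.map star)ᴴ * P * (C ⊗ₖ C.map star)) := by
  have hD' : Dᴴ ∈ Matrix.unitaryGroup (Fin N) ℂ := Unitary.star_mem hD
  let σ := (Equiv.refl (Fin N)).prodCongr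
    (Equiv.prodComm (Fin ℓ → Fin N × Fin N) (Fin r → Fin N × Fin N))
  let T := C ⊗ₖ (tensorPower (Fin r) (C.map star ⊗ₖ Dᴴ) ⊗ₖ tensorPower (Fin ℓ) (C ⊗ₖ Dᵀ))
  have htwirl : twirlOp N ℓ r C D = T.submatrix σ σ := by
    ext p q
    exact mul_right_comm _ _ _ |>.trans (mul_assoc _ _ _)
  have hslot (Q) : ampliation (slotR i) Q = (ampliation (slotEquiv i) Q).submatrix σ σ := rfl
  rw [htwirl, hslot, hslot, Matrix.conjTranspose_submatrix, Matrix.submatrix_mul_equiv,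
    Matrix.submatrix_mul_equiv, kronecker_tensorPower_conj_ampliation i C
      (Matrix.map_star_mem_unitaryGroup_iff.2 hC) hD'
      (tensorPower_mem_unitaryGroup <| Matrix.kronecker_mem_unitary hC
        (Matrix.transpose_mem_unitaryGroup_iff.2 hD))]

lemma twirlOp_conj (hC : C ∈ Matrix.unitaryGroup (Fin N) ℂ)
    (hD : D ∈ Matrix.unitaryGroup (Fin N) ℂ) :
    (twirlOp N ℓ r C D)ᴴ *
        ((∑ i : Fin ℓ, eqProjL N ℓ r i) + ∑ i : Fin r, (eqProjR N ℓ r i - eprProjR N ℓ r i)) *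
        twirlOp N ℓ r C D =
      (∑ i : Fin ℓ, ampliation (slotL i) ((C ⊗ₖ C)ᴴ * pairEq (Fin N) * (C ⊗ₖ C))) +
        ∑ i : Fin r, ampliation (slotR i) ((C ⊗ₖ C.map star)ᴴ *
          (pairEq (Fin N) - pairEPR (Fin N)) * (C ⊗ₖ C.map star)) := by
  simp only [eqProjL_eq_ampliation, eqProjR_eq_ampliation, eprProjR_eq_ampliation, ← map_sub,
    mul_add, add_mul, Matrix.mul_sum, Matrix.sum_mul, twirlOp_conj_ampliation_slotL hC hD,
    twirlOp_conj_ampliation_slotR hC hD]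

open scoped Matrix.Norms.L2Operator

lemma integral_twirlOp_conj {μ ν : Measure (Matrix.unitaryGroup (Fin N) ℂ)}
    [IsProbabilityMeasure μ] [IsProbabilityMeasure ν] (hμ : IsRowTwoDesign μ) :
    (Matrix.of fun p q : RegIdx N ℓ r => ∫ C, ∫ D, ((twirlOp N ℓ r C D)ᴴ *
        ((∑ i : Fin ℓ, eqProjL N ℓ r i) + ∑ i : Fin r, (eqProjR N ℓ r i - eprProjR N ℓ r i)) *
        twirlOp N ℓ r C D) p q ∂ν ∂μ) =
      ((N : ℂ) + 1)⁻¹ • ((∑ i : Fin ℓ, ampliation (slotL i) (1 + swapMatrix (Fin N))) +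
        ∑ i : Fin r, ampliation (slotR i) (1 - pairEPR (Fin N))) := by
  let ampL := ∑ i : Fin ℓ, (ampliation (slotL (N := N) (r := r) i)).toLinearMap
  let ampR := ∑ i : Fin r, (ampliation (slotR (N := N) (ℓ := ℓ) i)).toLinearMap
  let φ := fun C : Matrix.unitaryGroup (Fin N) ℂ =>
    (C.1 ⊗ₖ C.1)ᴴ * pairEq (Fin N) * (C.1 ⊗ₖ C.1)
  let ψ := fun C : Matrix.unitaryGroup (Fin N) ℂ =>
    (C.1 ⊗ₖ C.1.map star)ᴴ * (pairEq (Fin N) - pairEPR (Fin N)) * (C.1 ⊗ₖ C.1.map star)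
  have hφ : Integrable φ μ := integrable_conj μ (by fun_prop) _
  have hψ : Integrable ψ μ := integrable_conj μ (by fun_prop) _
  have hφ_mean : ∫ C, φ C ∂μ = ((N : ℂ) + 1)⁻¹ • (1 + swapMatrix (Fin N)) :=
    hμ.trans (by rw [Fintype.card_fin])
  have hψ_mean : ∫ C, ψ C ∂μ = ((N : ℂ) + 1)⁻¹ • (1 - pairEPR (Fin N)) :=
    hμ.integral_partialTranspose.trans (by rw [Fintype.card_fin])
  ext p q
  let evalAmp := Matrix.entryLinearMap ℂ ℂ p q ∘ₗ ampL.coprod ampR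
  have happly (X Y : Matrix (Fin N × Fin N) (Fin N × Fin N) ℂ) :
      evalAmp (X, Y) = ((∑ i : Fin ℓ, ampliation (slotL i) X) +
        ∑ i : Fin r, ampliation (slotR i) Y : Matrix (RegIdx N ℓ r) (RegIdx N ℓ r) ℂ) p q := by
    simp [evalAmp, ampL, ampR]
  calc
    _ = ∫ C, evalAmp (φ C, ψ C) ∂μ := by
      simp only [Matrix.of_apply, twirlOp_conj (Subtype.prop _) (Subtype.prop _), integral_const,
        probReal_univ, one_smul, happly, φ, ψ]
    _ = evalAmp (((N : ℂ) + 1)⁻¹ • (1 + swapMatrix (Fin N), 1 - pairEPR (Fin N))) := by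
      rw [integral_linearMap _ (hφ.prodMk hψ), integral_pair hφ hψ, hφ_mean, hψ_mean,
        Prod.smul_mk]
    _ = _ := by rw [map_smul, happly, Matrix.smul_apply]

lemma norm_one_add_swapMatrix_le (n : Type*) [Fintype n] [DecidableEq n] :
    ‖1 + swapMatrix n‖ ≤ 2 := calc
  ‖1 + swapMatrix n‖ ≤ ‖(1 : Matrix (n × n) (n × n) ℂ)‖ + ‖swapMatrix n‖ := norm_add_le _ _
  _ ≤ 1 + 1 := add_le_add (IsStarProjection.one _).norm_le (Matrix.permMatrix_l2_opNorm_le _)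
  _ = 2 := one_add_one_eq_two

theorem two_design_twirling_bound_general (N ℓ r : ℕ)
    (μ ν : Measure (Matrix.unitaryGroup (Fin N) ℂ)) [IsProbabilityMeasure μ]
    [IsProbabilityMeasure ν] (hμ : IsRowTwoDesign μ) :
    opNorm (Matrix.of fun p q : RegIdx N ℓ r => ∫ C, ∫ D, ((twirlOp N ℓ r C D)ᴴ *
        ((∑ i : Fin ℓ, eqProjL N ℓ r i) + ∑ i : Fin r, (eqProjR N ℓ r i - eprProjR N ℓ r i)) *
        twirlOp N ℓ r C D) p q ∂ν ∂μ) ≤ (2 * (ℓ : ℝ) + r) / ((N : ℝ) + 1) := by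
  rw [integral_twirlOp_conj hμ]
  have hL (i : Fin ℓ) :
      ‖ampliation (slotL (N := N) (r := r) i) (1 + swapMatrix (Fin N))‖ ≤ 2 :=
    (NonUnitalStarAlgHom.norm_apply_le _ _).trans (norm_one_add_swapMatrix_le _)
  have hR (i : Fin r) :
      ‖ampliation (slotR (N := N) (ℓ := ℓ) i) (1 - pairEPR (Fin N))‖ ≤ 1 :=
    (NonUnitalStarAlgHom.norm_apply_le _ _).trans isStarProjection_pairEPR.one_sub.norm_le
  have hcard : ‖((N : ℂ) + 1)⁻¹‖ = ((N : ℝ) + 1)⁻¹ := by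
    rw [norm_inv, ← Nat.cast_add_one, Complex.norm_natCast, Nat.cast_add_one]
  calc
    _ = ((N : ℝ) + 1)⁻¹ * ‖(∑ i : Fin ℓ, ampliation (slotL i) (1 + swapMatrix (Fin N))) +
        ∑ i : Fin r, ampliation (slotR i) (1 - pairEPR (Fin N))‖ := by
      rw [← hcard, ← norm_smul]; rfl
    _ ≤ ((N : ℝ) + 1)⁻¹ * ((∑ _i : Fin ℓ, 2) + ∑ _i : Fin r, 1) := by
      gcongr
      exact (norm_add_le _ _).trans <| add_le_add (norm_sum_le_of_le _ fun i _ => hL i)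
        (norm_sum_le_of_le _ fun i _ => hR i)
    _ = (2 * (ℓ : ℝ) + r) / ((N : ℝ) + 1) := by
      simp only [Finset.sum_const, Finset.card_univ, Fintype.card_fin, nsmul_eq_mul]
      ring

end Registers

/-- **Two-design twirling bound.** For the normalized Haar probability measure `μ` on
`U(N)` (characterized as a left-invariant probability measure),
`‖ ∫∫ T[C,D]† (Σ_i Π^eq_{L,i} + Σ_i (Π^eq_{R,i} − Π^EPR_{R,i})) T[C,D] dμ(C) dμ(D) ‖ ≤
(2ℓ+r)/(N+1)`. -/
theorem two_design_twirling_bound (N ℓ r : ℕ) (hN : 1 ≤ N)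
    (μ : Measure (Matrix.unitaryGroup (Fin N) ℂ)) [IsProbabilityMeasure μ]
    (hinv : ∀ V : Matrix.unitaryGroup (Fin N) ℂ, μ.map (fun U => V * U) = μ) :
    opNorm (Matrix.of fun p q : RegIdx N ℓ r =>
        ∫ C, ∫ D,
          (((twirlOp N ℓ r (C : Matrix (Fin N) (Fin N) ℂ)
                (D : Matrix (Fin N) (Fin N) ℂ))ᴴ *
              ((∑ i : Fin ℓ, eqProjL N ℓ r i) +
                ∑ i : Fin r, (eqProjR N ℓ r i - eprProjR N ℓ r i)) *
              twirlOp N ℓ r (C : Matrix (Fin N) (Fin N) ℂ)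
                (D : Matrix (Fin N) (Fin N) ℂ)) p q) ∂μ ∂μ) ≤
      (2 * (ℓ : ℝ) + r) / ((N : ℝ) + 1) := by
  have : μ.IsMulLeftInvariant := ⟨hinv⟩
  exact two_design_twirling_bound_general N ℓ r μ μ (isRowTwoDesign_of_isMulLeftInvariant μ)
end
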